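/- arXiv:2410.07756 — 5 statements merged into one kernel-verified Lean document; each statement's English description precedes it below -/
import Mathlib

section
/- Let G = (V, E) be a finite simple connected loopless graph. For every subset A ⊆ E and every choice of edge weights c with 0 < c_e < ∞ for all e ∈ E, the relative resistances satisfy 0 ≤ ∑_{e ∈ A} r_e(c) ≤ |V| − k(A), where k(A) is the number of connected components of the spanning subgraph (V, A) of G with edge set A. -/
open scoped Classical

namespace RCurv

variable {V : Type*} [Fintype V] [DecidableEq V]

/-- `T` is (the edge set of) a spanning tree of `G`. -/
def IsSpanningTree (G : SimpleGraph V) (T : Finset (Sym2 V)) : Prop :=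
  (T : Set (Sym2 V)) ⊆ G.edgeSet ∧ (SimpleGraph.fromEdgeSet (T : Set (Sym2 V))).IsTree

/-- The finite set of all spanning trees of `G`. -/
noncomputable def spanningTrees (G : SimpleGraph V) : Finset (Finset (Sym2 V)) :=
  Finset.univ.filter fun T => IsSpanningTree G T

/-- The relative resistance `r_e(c)` of an edge `e`. -/
noncomputable def relRes (G : SimpleGraph V) (c : Sym2 V → ℝ) (e : Sym2 V) : ℝ :=
  (∑ T ∈ (spanningTrees G).filter (fun T => e ∈ T), ∏ t ∈ T, c t) /
    (∑ T ∈ spanningTrees G, ∏ t ∈ T, c t)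

/-- The resistance curvature `p_v(c)` of a vertex `v`. -/
noncomputable def curv (G : SimpleGraph V) (c : Sym2 V → ℝ) (v : V) : ℝ :=
  1 - (1 / 2) * ∑ u ∈ G.neighborFinset v, relRes G c s(u, v)

/-- `G` is resistance nonnegative. -/
def IsRN (G : SimpleGraph V) : Prop :=
  ∃ c : Sym2 V → ℝ, (∀ e ∈ G.edgeSet, 0 < c e) ∧ ∀ v : V, 0 ≤ curv G c v

/-- `G` is resistance positive. -/
def IsRP (G : SimpleGraph V) : Prop :=
  ∃ c : Sym2 V → ℝ, (∀ e ∈ G.edgeSet, 0 < c e) ∧ ∀ v : V, 0 < curv G c v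

/-- The indicator vector of a finite edge set, as a vector in `ℝ^{Sym2 V}`. -/
noncomputable def indVec (T : Finset (Sym2 V)) : Sym2 V → ℝ := fun e => if e ∈ T then 1 else 0

/-- The spanning tree polytope `P(G)`. -/
noncomputable def stPolytope (G : SimpleGraph V) : Set (Sym2 V → ℝ) :=
  convexHull ℝ {x | ∃ T ∈ spanningTrees G, x = indVec T}

/-- `M` is a matching of `G`. -/
def IsMatching' (G : SimpleGraph V) (M : Finset (Sym2 V)) : Prop :=
  (M : Set (Sym2 V)) ⊆ G.edgeSet ∧ ∀ v : V, (M.filter fun e => v ∈ e).card ≤ 1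

/-- The matching polytope `M(G)`. -/
noncomputable def matchingPolytope (G : SimpleGraph V) : Set (Sym2 V → ℝ) :=
  convexHull ℝ {x | ∃ M : Finset (Sym2 V), IsMatching' G M ∧ x = indVec M}

/-- A Hamiltonian path: a spanning tree in which every vertex has degree at most `2`. -/
def IsHamPath (G : SimpleGraph V) (H : Finset (Sym2 V)) : Prop :=
  IsSpanningTree G H ∧ ∀ v : V, (H.filter fun e => v ∈ e).card ≤ 2

end RCurv

/-- A forest with edge set `F` has at most `|V| - k(F)` edges. -/
theorem forest_card_add_le {V : Type*} [Fintype V] [DecidableEq V] (F : Finset (Sym2 V))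
    (hd : ∀ e ∈ F, ¬ e.IsDiag)
    (hF : (SimpleGraph.fromEdgeSet (F : Set (Sym2 V))).IsAcyclic) :
    F.card + Nat.card (SimpleGraph.fromEdgeSet (F : Set (Sym2 V))).ConnectedComponent
      ≤ Fintype.card V := by
  induction F using Finset.induction_on with
  | empty =>
    rw [Finset.card_empty, zero_add, ← Nat.card_eq_fintype_card]
    exact Nat.card_le_card_of_surjective
      (SimpleGraph.connectedComponentMk _) Quot.mk_surjective
  | insert e F he ih =>
    have hle : SimpleGraph.fromEdgeSet (F : Set (Sym2 V)) ≤
        SimpleGraph.fromEdgeSet ((insert e F : Finset (Sym2 V)) : Set (Sym2 V)) :=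
      SimpleGraph.fromEdgeSet_mono (by simp)
    have h1 := ih (fun x hx => hd x (Finset.mem_insert_of_mem hx)) (hF.anti hle)
    rw [Finset.card_insert_of_notMem he]
    have hed := hd e (Finset.mem_insert_self e F)
    have hlt : Nat.card (SimpleGraph.fromEdgeSet
          ((insert e F : Finset (Sym2 V)) : Set (Sym2 V))).ConnectedComponent <
        Nat.card (SimpleGraph.fromEdgeSet (F : Set (Sym2 V))).ConnectedComponent := by
      have hs := SimpleGraph.ConnectedComponent.surjective_map_ofLE hle
      refine lt_of_le_of_ne (Nat.card_le_card_of_surjective _ hs) fun heq => ?_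
      have hb := (Nat.bijective_iff_surjective_and_card _).mpr ⟨hs, heq.symm⟩
      have hbr := SimpleGraph.isAcyclic_iff_forall_isBridge.mp hF
        (e := e) (by simp [SimpleGraph.edgeSet_fromEdgeSet, hed])
      induction e with
      | h u v =>
        rw [SimpleGraph.isBridge_iff] at hbr
        apply hbr
        have huv : u ≠ v := by simpa using hed
        have hr : (SimpleGraph.fromEdgeSet (F : Set (Sym2 V))).Reachable u v := by
          apply SimpleGraph.ConnectedComponent.exact
          apply hb.1
          simp only [SimpleGraph.ConnectedComponent.map_mk]
          apply SimpleGraph.ConnectedComponent.sound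
          apply SimpleGraph.Adj.reachable
          simp [huv]
        refine hr.mono ?_
        intro a b hab
        simp only [SimpleGraph.fromEdgeSet_adj, SimpleGraph.deleteEdges_adj] at hab ⊢
        refine ⟨⟨by simpa using Or.inr hab.1, hab.2⟩, fun h => he ?_⟩
        rw [Set.mem_singleton_iff] at h
        rw [← h]
        exact hab.1
    omega

open RCurv in
/-- For any subset `A` of edges and positive edge weights, the relative resistances over `A`
sum to a value between `0` and `|V| - k(A)`, where `k(A)` is the number of connected
components of the spanning subgraph `(V, A)`. -/
theorem relRes_sum_bounds {V : Type*} [Fintype V] [DecidableEq V]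
    (G : SimpleGraph V) (hG : G.Connected)
    (A : Finset (Sym2 V)) (hA : A ⊆ G.edgeFinset)
    (c : Sym2 V → ℝ) (hc : ∀ e ∈ G.edgeSet, 0 < c e) :
    0 ≤ ∑ e ∈ A, relRes G c e ∧
      ∑ e ∈ A, relRes G c e ≤
        (Fintype.card V : ℝ) -
          (Nat.card (SimpleGraph.fromEdgeSet (A : Set (Sym2 V))).ConnectedComponent : ℝ) := by
  have hw : ∀ T ∈ spanningTrees G, 0 ≤ ∏ t ∈ T, c t := by
    intro T hT
    have hT' : IsSpanningTree G T := by simpa [spanningTrees] using hT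
    exact Finset.prod_nonneg fun t ht => (hc t (hT'.1 ht)).le
  have hZ : 0 ≤ ∑ T ∈ spanningTrees G, ∏ t ∈ T, c t := Finset.sum_nonneg hw
  refine ⟨Finset.sum_nonneg fun e _ => div_nonneg
    (Finset.sum_nonneg fun T hT => hw T (Finset.mem_filter.mp hT).1) hZ, ?_⟩
  have hkA : ∀ F : Finset (Sym2 V), F ⊆ A →
      (SimpleGraph.fromEdgeSet (F : Set (Sym2 V))).IsAcyclic →
      (F.card : ℝ) ≤ (Fintype.card V : ℝ) -
          (Nat.card (SimpleGraph.fromEdgeSet (A : Set (Sym2 V))).ConnectedComponent : ℝ) := by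
    intro F hFA hF
    have h1 := forest_card_add_le F (fun e he =>
      G.not_isDiag_of_mem_edgeSet (by simpa using hA (hFA he))) hF
    have h2 := SimpleGraph.ConnectedComponent.card_le_card_of_le
      (SimpleGraph.fromEdgeSet_mono (Finset.coe_subset.mpr hFA))
    have h3 : F.card + Nat.card
        (SimpleGraph.fromEdgeSet (A : Set (Sym2 V))).ConnectedComponent ≤ Fintype.card V := by
      omega
    rw [le_sub_iff_add_le]
    exact_mod_cast h3
  have h0 := hkA ∅ (Finset.empty_subset _) (by simp)
  simp only [relRes]
  rw [← Finset.sum_div]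
  refine div_le_of_le_mul₀ hZ (by simpa using h0) ?_
  simp only [Finset.sum_filter]
  rw [Finset.sum_comm, Finset.mul_sum]
  refine Finset.sum_le_sum fun T hT => ?_
  have hT' : IsSpanningTree G T := by simpa [spanningTrees] using hT
  rw [← Finset.sum_filter, Finset.sum_const, nsmul_eq_mul]
  refine mul_le_mul_of_nonneg_right (hkA _ (Finset.filter_subset _ _) ?_) (hw T hT)
  refine hT'.2.isAcyclic.anti (SimpleGraph.fromEdgeSet_mono ?_)
  intro e he
  exact (Finset.mem_filter.mp he).2
end

section
/- A finite simple connected loopless graph G is resistance nonnegative (RN) if and only if the intersection P(G)° ∩ 2M(G) of the relative interior of the spanning tree polytope with the twice-dilated matching polytope is non-empty. -/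
open scoped Classical

namespace RCurvProof

lemma mem_hull_range {ι E : Type*} [Fintype ι] [AddCommGroup E] [Module ℝ E] (a : ι → E) (x : E) :
    x ∈ convexHull ℝ (Set.range a) ↔
      ∃ w : ι → ℝ, (∀ i, 0 ≤ w i) ∧ ∑ i, w i = 1 ∧ ∑ i, w i • a i = x := by
  constructor
  · intro hx
    have hsub : convexHull ℝ (Set.range a) ⊆ {x | ∃ w : ι → ℝ, (∀ i, 0 ≤ w i) ∧ ∑ i, w i = 1 ∧ ∑ i, w i • a i = x} := by
      apply convexHull_min
      · rintro _ ⟨i, rfl⟩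
        refine ⟨Pi.single i 1, ?_, ?_, ?_⟩
        · intro j
          by_cases h : j = i
          · subst h; simp
          · simp [h]
        · simp
        · simp [Pi.single_apply, ite_smul]
      · rintro p ⟨w, hw, hw1, rfl⟩ q ⟨v, hv, hv1, rfl⟩ s t hs ht hst
        refine ⟨fun i => s * w i + t * v i, ?_, ?_, ?_⟩
        · intro i
          have := hw i
          have := hv i
          positivity
        · rw [Finset.sum_add_distrib, ← Finset.mul_sum, ← Finset.mul_sum, hw1, hv1]; linarith
        · simp only [add_smul, Finset.sum_add_distrib, Finset.smul_sum, mul_smul]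
    exact hsub hx
  · rintro ⟨w, hw, hw1, hx⟩
    exact mem_convexHull_of_exists_fintype w a hw hw1 (fun i => ⟨i, rfl⟩) hx

lemma relint_pos {ι E : Type*} [Fintype ι] [Nonempty ι] [NormedAddCommGroup E] [NormedSpace ℝ E]
    (a : ι → E) (x : E) (hx : x ∈ intrinsicInterior ℝ (convexHull ℝ (Set.range a))) :
    ∃ w : ι → ℝ, (∀ i, 0 < w i) ∧ ∑ i, w i = 1 ∧ ∑ i, w i • a i = x := by
  set P := convexHull ℝ (Set.range a) with hP
  rw [mem_intrinsicInterior] at hx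
  obtain ⟨y, hy, rfl⟩ := hx
  have hN : (0 : ℝ) < Fintype.card ι := by exact_mod_cast Fintype.card_pos
  set β : ι → ℝ := fun _ => (Fintype.card ι : ℝ)⁻¹ with hβ
  have hβ0 : ∀ i, 0 < β i := fun i => by simp only [hβ]; positivity
  have hβ1 : ∑ i, β i = 1 := by simp [hβ]
  set b : E := ∑ i, β i • a i with hb
  have hbP : b ∈ P := (mem_hull_range a b).2 ⟨β, fun i => (hβ0 i).le, hβ1, rfl⟩
  have hbA : b ∈ affineSpan ℝ P := subset_affineSpan ℝ P hbP
  have hcont : Continuous (fun t : ℝ => (⟨AffineMap.lineMap (y : E) b t, AffineMap.lineMap_mem t y.2 hbA⟩ : affineSpan ℝ P)) := by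
    apply Continuous.subtype_mk
    exact AffineMap.lineMap_continuous
  have h0 : (⟨AffineMap.lineMap (y : E) b (0:ℝ), AffineMap.lineMap_mem 0 y.2 hbA⟩ : affineSpan ℝ P) = y := by
    ext; simp
  have hnh : ∀ᶠ t : ℝ in nhds 0, AffineMap.lineMap (y : E) b t ∈ P := by
    have := hcont.continuousAt (x := 0)
    have h2 := this.eventually_mem (by rw [h0]; exact mem_interior_iff_mem_nhds.1 hy)
    exact h2
  obtain ⟨ε, hε, hball⟩ := Metric.eventually_nhds_iff.1 hnh
  have hm := @hball (-(ε/2)) (by simp [abs_of_pos hε]; exact hε)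
  obtain ⟨μ, hμ, hμ1, hμx⟩ := (mem_hull_range a _).1 hm
  have hk : (0:ℝ) < 1 + ε/2 := by linarith
  refine ⟨fun i => (1 + ε/2)⁻¹ * (μ i + ε/2 * β i), ?_, ?_, ?_⟩
  · intro i
    have := hμ i
    have := hβ0 i
    positivity
  · rw [← Finset.mul_sum, Finset.sum_add_distrib, ← Finset.mul_sum, hμ1, hβ1, mul_one, inv_mul_cancel₀ hk.ne']
  · simp only [mul_smul, add_smul, ← Finset.smul_sum, Finset.sum_add_distrib]
    rw [← hb, hμx, AffineMap.lineMap_apply_module, inv_smul_eq_iff₀ hk.ne']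
    module

lemma pos_relint {ι E : Type*} [Fintype ι] [Nonempty ι] [NormedAddCommGroup E] [NormedSpace ℝ E]
    [FiniteDimensional ℝ E]
    (a : ι → E) (w : ι → ℝ) (hw : ∀ i, 0 < w i) (hw1 : ∑ i, w i = 1) :
    ∑ i, w i • a i ∈ intrinsicInterior ℝ (convexHull ℝ (Set.range a)) := by
  set P := convexHull ℝ (Set.range a) with hP
  set x := ∑ i, w i • a i with hx
  have hPc : Convex ℝ P := convex_convexHull ℝ _
  have hxP : x ∈ P := (mem_hull_range a x).2 ⟨w, fun i => (hw i).le, hw1, rfl⟩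
  obtain ⟨z, hz⟩ := Set.Nonempty.intrinsicInterior hPc ⟨x, hxP⟩
  obtain ⟨z', hz', rfl⟩ := mem_intrinsicInterior.1 hz
  obtain ⟨μ, hμ, hμ1, hμx⟩ := (mem_hull_range a _).1 (intrinsicInterior_subset hz)
  obtain ⟨i0, hi0⟩ := Finite.exists_min w
  have hμle : ∀ i, μ i ≤ 1 := fun i => by
    rw [← hμ1]; exact Finset.single_le_sum (fun j _ => hμ j) (Finset.mem_univ i)
  have hw01 : w i0 ≤ 1 := by
    rw [← hw1]; exact Finset.single_le_sum (fun j _ => (hw j).le) (Finset.mem_univ i0)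
  set ε := w i0 / 2 with hε
  have hε0 : 0 < ε := by have := hw i0; positivity
  have hε1 : 0 < 1 - ε := by linarith
  set y : E := ∑ i, ((1 - ε)⁻¹ * (w i - ε * μ i)) • a i with hy
  have hyP : y ∈ P := by
    refine (mem_hull_range a y).2 ⟨_, ?_, ?_, rfl⟩
    · intro i
      have h1 := hi0 i
      have h2 : ε * μ i ≤ ε * 1 := by gcongr; exact hμle i
      have : 0 ≤ w i - ε * μ i := by linarith
      positivity
    · rw [← Finset.mul_sum, Finset.sum_sub_distrib, ← Finset.mul_sum, hμ1, hw1, mul_one, inv_mul_cancel₀ hε1.ne']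
  have hy2 : (1 - ε) • y = x - ε • (z' : E) := by
    have h : y = (1 - ε)⁻¹ • (x - ε • (z' : E)) := by
      rw [hy, ← hμx, hx]
      simp only [mul_smul, ← Finset.smul_sum, sub_smul, Finset.sum_sub_distrib]
    rw [h, smul_inv_smul₀ hε1.ne']
  have hyA : y ∈ affineSpan ℝ P := subset_affineSpan ℝ P hyP
  have hxA : x ∈ affineSpan ℝ P := subset_affineSpan ℝ P hxP
  have hcont : Continuous (fun p : affineSpan ℝ P => (⟨AffineMap.lineMap y (p : E) (ε⁻¹), AffineMap.lineMap_mem _ hyA p.2⟩ : affineSpan ℝ P)) := by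
    apply Continuous.subtype_mk
    simp only [AffineMap.lineMap_apply_module]
    fun_prop
  rw [mem_intrinsicInterior]
  refine ⟨⟨x, hxA⟩, ?_, rfl⟩
  rw [mem_interior]
  refine ⟨(fun p : affineSpan ℝ P => (⟨AffineMap.lineMap y (p : E) (ε⁻¹), AffineMap.lineMap_mem _ hyA p.2⟩ : affineSpan ℝ P)) ⁻¹' (interior ((↑) ⁻¹' P)), ?_, isOpen_interior.preimage hcont, ?_⟩
  · intro p hp
    have hp' := interior_subset hp
    simp only [Set.mem_preimage, AffineMap.lineMap_apply_module] at hp' ⊢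
    have := hPc hp' hyP hε0.le hε1.le (by ring)
    convert this using 1
    rw [smul_add, smul_smul, smul_smul, mul_inv_cancel₀ hε0.ne', mul_sub, mul_inv_cancel₀ hε0.ne']
    module
  · simp only [Set.mem_preimage]
    convert hz' using 1
    ext
    simp only [AffineMap.lineMap_apply_module]
    have : x = (1 - ε) • y + ε • (z' : E) := by rw [hy2]; abel
    rw [this, smul_add, smul_smul, smul_smul, inv_mul_cancel₀ hε0.ne', mul_sub, inv_mul_cancel₀ hε0.ne']
    module

lemma gibbs {ι κ : Type*} [Fintype ι] [Fintype κ] (a : ι → κ → ℝ) (w : ι → ℝ)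
    (hw : ∀ i, 0 < w i) (hw1 : ∑ i, w i = 1) :
    ∃ θ : κ → ℝ, ∀ k, ∑ i, Real.exp (∑ j, θ j * a i j) * (a i k - ∑ l, w l * a l k) = 0 := by
  classical
  set x : κ → ℝ := fun k => ∑ l, w l * a l k with hx
  let A : (κ → ℝ) →ₗ[ℝ] (ι → ℝ) :=
    { toFun := fun θ i => ∑ j, θ j * (a i j - x j)
      map_add' := by intro p q; ext i; simp [add_mul, Finset.sum_add_distrib]
      map_smul' := by intro c q; ext i; simp [mul_assoc, Finset.mul_sum] }
  have hA : ∀ θ i, A θ i = ∑ j, θ j * (a i j - x j) := fun _ _ => rfl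
  have hAw : ∀ θ, ∑ i, w i * A θ i = 0 := by
    intro θ
    simp only [hA, Finset.mul_sum]
    rw [Finset.sum_comm]
    apply Finset.sum_eq_zero
    intro j _
    have : ∀ i, w i * (θ j * (a i j - x j)) = θ j * (w i * a i j) - θ j * x j * w i := by intro i; ring
    simp only [this, Finset.sum_sub_distrib, ← Finset.mul_sum, hw1]
    simp [hx]
  set N : ℝ := ((Fintype.card ι : ℕ) : ℝ) with hN
  set S : Set (ι → ℝ) := {y | y ∈ LinearMap.range A ∧ ∑ i, Real.exp (y i) ≤ N} with hS
  have hclosed : IsClosed S := by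
    apply IsClosed.inter
    · exact Submodule.closed_of_finiteDimensional (LinearMap.range A)
    · have hc : Continuous (fun y : ι → ℝ => ∑ i, Real.exp (y i)) := by fun_prop
      exact isClosed_le hc continuous_const
  have hN0 : 0 ≤ N := by positivity
  have hub : ∀ y ∈ S, ∀ i, y i ≤ N := by
    intro y hy i
    have h1 : Real.exp (y i) ≤ N := (Finset.single_le_sum (f := fun i => Real.exp (y i)) (fun j _ => (Real.exp_pos _).le) (Finset.mem_univ i)).trans hy.2
    have := Real.add_one_le_exp (y i)
    linarith
  have hlb : ∀ y ∈ S, ∀ i, -(N / w i) ≤ y i := by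
    rintro y hy i
    obtain ⟨θ, rfl⟩ := hy.1
    have h1 := hAw θ
    rw [← Finset.add_sum_erase _ _ (Finset.mem_univ i)] at h1
    have h2 : ∑ j ∈ Finset.univ.erase i, w j * A θ j ≤ ∑ j ∈ Finset.univ.erase i, w j * N := by
      apply Finset.sum_le_sum
      intro j _
      exact mul_le_mul_of_nonneg_left (hub _ hy j) (hw j).le
    have h3 : ∑ j ∈ Finset.univ.erase i, w j * N ≤ ∑ j, w j * N :=
      Finset.sum_le_sum_of_subset_of_nonneg (Finset.erase_subset _ _) (fun j _ _ => mul_nonneg (hw j).le hN0)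
    rw [← Finset.sum_mul, ← Finset.sum_mul, hw1] at h3
    rw [← Finset.sum_mul] at h2
    rw [← neg_div, div_le_iff₀ (hw i)]
    linarith
  have hcomp : IsCompact S := by
    apply IsCompact.of_isClosed_subset (isCompact_Icc (a := fun i => -(N / w i)) (b := fun _ : ι => N)) hclosed
    intro y hy
    exact ⟨hlb y hy, hub y hy⟩
  have h0S : (0 : ι → ℝ) ∈ S := ⟨Submodule.zero_mem _, by simp [hN]⟩
  obtain ⟨y, hyS, hymin⟩ := hcomp.exists_isMinOn ⟨0, h0S⟩ (f := fun y => ∑ i, Real.exp (y i)) (by fun_prop)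
  obtain ⟨θ, rfl⟩ := hyS.1
  have hmin : ∀ θ', ∑ i, Real.exp (A θ i) ≤ ∑ i, Real.exp (A θ' i) := by
    intro θ'
    by_cases h : A θ' ∈ S
    · exact hymin h
    · have : ¬ ∑ i, Real.exp (A θ' i) ≤ N := fun h' => h ⟨⟨θ', rfl⟩, h'⟩
      exact hyS.2.trans (not_le.1 this).le
  refine ⟨θ, fun k => ?_⟩
  set g : ℝ → ℝ := fun t => ∑ i, Real.exp (A θ i + t * (a i k - x k)) with hg
  have hgmin : IsLocalMin g 0 := by
    apply Filter.Eventually.of_forall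
    intro t
    have := hmin (θ + t • Pi.single k 1)
    simp only [hg, zero_mul, add_zero]
    refine this.trans_eq ?_
    apply Finset.sum_congr rfl
    intro i _
    rw [map_add, map_smul]
    congr 1
    simp only [Pi.add_apply, Pi.smul_apply, smul_eq_mul]
    congr 2
    rw [hA]
    simp [Pi.single_apply]
  have hd : HasDerivAt g (∑ i, Real.exp (A θ i + 0 * (a i k - x k)) * (1 * (a i k - x k))) 0 := by
    apply HasDerivAt.fun_sum
    intro i _
    exact (((hasDerivAt_id (0:ℝ)).mul_const _).const_add _).exp
  have := hgmin.hasDerivAt_eq_zero hd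
  have key : ∀ i, Real.exp (A θ i) = Real.exp (-(∑ j, θ j * x j)) * Real.exp (∑ j, θ j * a i j) := by
    intro i
    rw [← Real.exp_add, hA]
    congr 1
    simp only [mul_sub, Finset.sum_sub_distrib]
    ring
  simp only [zero_mul, add_zero, one_mul, key, mul_assoc] at this
  rw [← Finset.mul_sum] at this
  exact (mul_eq_zero.1 this).resolve_left (Real.exp_ne_zero _)

section comb
set_option linter.unusedSectionVars false
variable {V : Type*} [Fintype V] [DecidableEq V]

lemma tree_bound (G : SimpleGraph V) (T : Finset (Sym2 V)) (hT : RCurv.IsSpanningTree G T)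
    (U : Finset V) (hU : U.Nonempty) :
    (T.filter (fun e => ∀ v ∈ e, v ∈ U)).card + 1 ≤ U.card := by
  have hac : ((SimpleGraph.fromEdgeSet (T : Set (Sym2 V))).induce (U : Set V)).IsAcyclic :=
    hT.2.isAcyclic.induce _
  have : Nonempty (U : Set V) := ⟨⟨_, hU.choose_spec⟩⟩
  obtain ⟨K, hK1, hK2, hK⟩ := SimpleGraph.Connected.exists_isTree_le_of_le_of_isAcyclic
    (G := (⊤ : SimpleGraph (U : Set V))) SimpleGraph.connected_top le_top hac
  have hcard := hK.card_edgeFinset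
  have hUc : Fintype.card (U : Set V) = U.card := by simp
  rw [hUc] at hcard
  rw [← hcard]
  gcongr
  refine (Finset.card_le_card (t := K.edgeFinset.image (Sym2.map Subtype.val)) ?_).trans Finset.card_image_le
  intro e he
  induction e using Sym2.ind with
  | _ p q =>
    rw [Finset.mem_filter] at he
    have hp := he.2 p (by simp)
    have hq := he.2 q (by simp)
    have hadj : G.Adj p q := hT.1 he.1
    rw [Finset.mem_image]
    refine ⟨s(⟨p, hp⟩, ⟨q, hq⟩), ?_, by simp⟩
    rw [SimpleGraph.mem_edgeFinset, SimpleGraph.mem_edgeSet]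
    apply hK1
    simp [hadj.ne, he.1]

/-- Matchings inside an edge set `H`. -/
def Mat (H M : Finset (Sym2 V)) : Prop :=
  M ⊆ H ∧ ∀ v : V, (M.filter fun e => v ∈ e).card ≤ 1

lemma alt_comp (M N : Finset (Sym2 V)) 
    (hM : ∀ v : V, (M.filter fun e => v ∈ e).card ≤ 1) (hN : ∀ v : V, (N.filter fun e => v ∈ e).card ≤ 1)
    (t u v : V) (htu : t ≠ u) (htv : t ≠ v) (huv : u ≠ v)
    (ht : ∀ e ∈ N, t ∉ e) (hu : ∀ e ∈ M, u ∉ e) (hv : ∀ e ∈ M, v ∉ e) :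
    ∃ C : Set V, t ∈ C ∧ (u ∉ C ∨ v ∉ C) ∧ ∀ e ∈ M ∪ N, ∀ a ∈ e, ∀ b ∈ e, a ∈ C → b ∈ C := by
  set F := SimpleGraph.fromEdgeSet ((M ∪ N : Finset (Sym2 V)) : Set (Sym2 V)) with hF
  refine ⟨{a | F.Reachable t a}, SimpleGraph.Reachable.refl _, ?_, ?_⟩
  · by_contra hcon
    push Not at hcon
    obtain ⟨huC, hvC⟩ := hcon
    set c := F.connectedComponentMk t with hc
    have hconn := c.connected_toSimpleGraph
    have hmem : ∀ a, F.Reachable t a → a ∈ c.supp := by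
      intro a ha
      rw [SimpleGraph.ConnectedComponent.mem_supp_iff, hc, SimpleGraph.ConnectedComponent.eq]
      exact ha.symm
    have h1 := hconn.card_vert_le_card_edgeSet_add_one
    rw [Nat.card_eq_fintype_card, Nat.card_eq_fintype_card, SimpleGraph.card_edgeSet] at h1
    have h2 := c.toSimpleGraph.sum_degrees_eq_twice_card_edges
    have hdeg : ∀ a : c, c.toSimpleGraph.degree a ≤ (M.filter fun e => (a : V) ∈ e).card + (N.filter fun e => (a : V) ∈ e).card := by
      intro a
      refine le_trans ?_ (Finset.card_union_le _ _)
      rw [← Finset.filter_union, ← SimpleGraph.card_neighborFinset_eq_degree]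
      apply Finset.card_le_card_of_injOn (fun b : c => s((a : V), (b : V)))
      · intro b hb
        rw [Finset.mem_coe, SimpleGraph.mem_neighborFinset] at hb
        have hb' : F.Adj a b := hb
        have hb' := (SimpleGraph.fromEdgeSet_adj _).1 hb'
        simp only [Finset.coe_filter, Set.mem_ofPred_eq]
        exact ⟨by exact_mod_cast hb'.1, by simp⟩
      · intro b _ b' _ hbb
        have hbb' : s((a : V), (b : V)) = s((a : V), (b' : V)) := hbb
        exact Subtype.ext (Sym2.congr_right.1 hbb')
    have hzero : ∀ (L : Finset (Sym2 V)) (p : V), (∀ e ∈ L, p ∉ e) → (L.filter fun e => p ∈ e).card = 0 := by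
      intro L p h
      rw [Finset.card_eq_zero, Finset.filter_eq_empty_iff]
      exact fun e he => h e he
    have hpt : ∀ a : c, c.toSimpleGraph.degree a + (if a = ⟨t, hmem t (SimpleGraph.Reachable.refl _)⟩ then 1 else 0)
        + (if a = ⟨u, hmem u huC⟩ then 1 else 0) + (if a = ⟨v, hmem v hvC⟩ then 1 else 0) ≤ 2 := by
      intro a
      have h3 := hdeg a
      have h4 := hM a
      have h5 := hN a
      simp only [Subtype.ext_iff]
      by_cases hat : (a : V) = t
      · have := hzero N t ht
        rw [hat] at h3 h4
        simp only [hat, htu, htv, if_true, if_false]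
        omega
      · by_cases hau : (a : V) = u
        · have := hzero M u hu
          rw [hau] at h3 h5
          simp only [hau, htu.symm, huv, if_true, if_false]
          omega
        · by_cases hav : (a : V) = v
          · have := hzero M v hv
            rw [hav] at h3 h5
            simp only [hav, htv.symm, huv.symm, if_true, if_false]
            omega
          · simp only [hat, hau, hav, if_false]
            omega
    have hsum := Finset.sum_le_sum (s := Finset.univ) (fun a _ => hpt a)
    simp only [Finset.sum_add_distrib, Finset.sum_ite_eq', Finset.mem_univ, if_true,
      Finset.sum_const, Finset.card_univ, smul_eq_mul] at hsum
    omega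
  · intro e he a ha b hb hta
    by_cases hab : a = b
    · subst hab; exact hta
    · refine SimpleGraph.Reachable.trans hta (SimpleGraph.Adj.reachable ?_)
      have : e = s(a, b) := (Sym2.mem_and_mem_iff hab).1 ⟨ha, hb⟩
      rw [hF, SimpleGraph.fromEdgeSet_adj]
      exact ⟨by rw [← this]; exact_mod_cast he, hab⟩

lemma sum_filter_swap (w : Sym2 V → ℝ) (M N : Finset (Sym2 V)) (C : Set V) :
    ∑ e ∈ M.filter (fun e => ¬ ∀ a ∈ e, a ∈ C) ∪ N.filter (fun e => ∀ a ∈ e, a ∈ C), w e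
      = ∑ e ∈ M, (if ∀ a ∈ e, a ∈ C then 0 else w e) + ∑ e ∈ N, (if ∀ a ∈ e, a ∈ C then w e else 0) := by
  rw [Finset.sum_union, Finset.sum_filter, Finset.sum_filter]
  · simp only [ite_not]
  rw [Finset.disjoint_left]
  intro e he he'
  exact (Finset.mem_filter.1 he).2 (Finset.mem_filter.1 he').2

lemma sum_split (w : Sym2 V → ℝ) (M : Finset (Sym2 V)) (C : Set V) :
    ∑ e ∈ M, w e
      = ∑ e ∈ M, (if ∀ a ∈ e, a ∈ C then 0 else w e) + ∑ e ∈ M, (if ∀ a ∈ e, a ∈ C then w e else 0) := by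
  rw [← Finset.sum_add_distrib]
  apply Finset.sum_congr rfl
  intro e _
  split_ifs <;> simp

lemma swap_deg (M N : Finset (Sym2 V)) (C : Set V)
    (hC : ∀ e ∈ M ∪ N, ∀ a ∈ e, ∀ b ∈ e, a ∈ C → b ∈ C) (v : V) :
    (M.filter (fun e => ¬ ∀ a ∈ e, a ∈ C) ∪ N.filter (fun e => ∀ a ∈ e, a ∈ C)).filter (fun e => v ∈ e)
      ⊆ (if v ∈ C then N else M).filter (fun e => v ∈ e) := by
  intro e he
  simp only [Finset.mem_filter, Finset.mem_union] at he hC ⊢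
  obtain ⟨h1 | h1, hv⟩ := he
  · have : v ∉ C := fun h => h1.2 (fun a ha => hC e (Or.inl h1.1) v hv a ha h)
    simp [this, h1.1, hv]
  · have : v ∈ C := h1.2 v hv
    simp [this, h1.1, hv]

lemma gallai_trans (H : Finset (Sym2 V)) (w : Sym2 V → ℝ) (ν : ℝ)
    (hmax : ∀ M, Mat H M → ∑ e ∈ M, w e ≤ ν)
    (hmiss : ∀ t, ∃ M, Mat H M ∧ ∑ e ∈ M, w e = ν ∧ ∀ e ∈ M, t ∉ e)
    (t u v : V) (htu : t ≠ u) (htv : t ≠ v) (huv : u ≠ v)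
    (M : Finset (Sym2 V)) (hM : Mat H M) (hMν : ∑ e ∈ M, w e = ν)
    (hu : ∀ e ∈ M, u ∉ e) (hv : ∀ e ∈ M, v ∉ e) :
    ∃ M, Mat H M ∧ ∑ e ∈ M, w e = ν ∧ (∀ e ∈ M, t ∉ e) ∧ ((∀ e ∈ M, u ∉ e) ∨ (∀ e ∈ M, v ∉ e)) := by
  obtain ⟨N, hN, hNν, ht⟩ := hmiss t
  obtain ⟨C, htC, huvC, hC⟩ := alt_comp M N hM.2 hN.2 t u v htu htv huv ht hu hv
  have hC' : ∀ e ∈ N ∪ M, ∀ a ∈ e, ∀ b ∈ e, a ∈ C → b ∈ C := by rwa [Finset.union_comm]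
  have mk : ∀ M N, Mat H M → Mat H N → (∀ e ∈ M ∪ N, ∀ a ∈ e, ∀ b ∈ e, a ∈ C → b ∈ C) →
      Mat H (M.filter (fun e => ¬ ∀ a ∈ e, a ∈ C) ∪ N.filter (fun e => ∀ a ∈ e, a ∈ C)) := by
    intro M N hM hN hC
    refine ⟨Finset.union_subset ((Finset.filter_subset _ _).trans hM.1) ((Finset.filter_subset _ _).trans hN.1), ?_⟩
    intro v
    refine (Finset.card_le_card (swap_deg M N C hC v)).trans ?_
    split_ifs
    · exact hN.2 v
    · exact hM.2 v
  have m1 := mk M N hM hN hC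
  have m2 := mk N M hN hM hC'
  have e1 := hmax _ m1
  have e2 := hmax _ m2
  rw [sum_filter_swap] at e1 e2
  have s1 := sum_split w M C
  have s2 := sum_split w N C
  have misses : ∀ p, (∀ e ∈ (if p ∈ C then N else M), p ∉ e) →
      ∀ e ∈ M.filter (fun e => ¬ ∀ a ∈ e, a ∈ C) ∪ N.filter (fun e => ∀ a ∈ e, a ∈ C), p ∉ e := by
    intro p hp e he hpe
    have := swap_deg M N C hC p (Finset.mem_filter.2 ⟨he, hpe⟩)
    rw [Finset.mem_filter] at this
    exact hp e this.1 hpe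
  refine ⟨_, m1, ?_, misses t (by simpa [htC] using ht), ?_⟩
  · rw [sum_filter_swap]
    linarith
  · rcases huvC with h | h
    · exact Or.inl (misses u (by simpa [h] using hu))
    · exact Or.inr (misses v (by simpa [h] using hv))

lemma gallai_adj (H : Finset (Sym2 V)) (w : Sym2 V → ℝ) (ν : ℝ) (hw : ∀ e ∈ H, 0 < w e)
    (hmax : ∀ M, Mat H M → ∑ e ∈ M, w e ≤ ν) (a b : V) (hab : s(a, b) ∈ H)
    (M : Finset (Sym2 V)) (hM : Mat H M) (hMν : ∑ e ∈ M, w e = ν)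
    (ha : ∀ e ∈ M, a ∉ e) (hb : ∀ e ∈ M, b ∉ e) : False := by
  have hn : s(a, b) ∉ M := fun h => ha _ h (by simp)
  have hm : Mat H (insert s(a, b) M) := by
    refine ⟨Finset.insert_subset hab hM.1, fun v => ?_⟩
    rw [Finset.filter_insert]
    split_ifs with h
    · have : M.filter (fun e => v ∈ e) = ∅ := by
        rw [Finset.filter_eq_empty_iff]
        rw [Sym2.mem_iff] at h
        rcases h with rfl | rfl
        · exact fun e he => ha e he
        · exact fun e he => hb e he
      rw [this]; simp
    · exact hM.2 v
  have := hmax _ hm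
  rw [Finset.sum_insert hn, hMν] at this
  linarith [hw _ hab]

lemma gallai_class (H : Finset (Sym2 V)) (w : Sym2 V → ℝ) (ν : ℝ) (hw : ∀ e ∈ H, 0 < w e)
    (hmax : ∀ M, Mat H M → ∑ e ∈ M, w e ≤ ν)
    (hmiss : ∀ t, ∃ M, Mat H M ∧ ∑ e ∈ M, w e = ν ∧ ∀ e ∈ M, t ∉ e) (a b : V) (hab : s(a, b) ∈ H) :
    ∃ U : Finset V, a ∈ U ∧ b ∈ U ∧ ∀ M, Mat H M → ∑ e ∈ M, w e = ν →
      U.card ≤ 1 + 2 * (M.filter (fun e => ∀ v ∈ e, v ∈ U)).card := by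
  set R : V → V → Prop := fun p q => ∃ M, Mat H M ∧ ∑ e ∈ M, w e = ν ∧ (∀ e ∈ M, p ∉ e) ∧ (∀ e ∈ M, q ∉ e) with hR
  have hRs : ∀ p q, R p q → R q p := by
    rintro p q ⟨M, h1, h2, h3, h4⟩
    exact ⟨M, h1, h2, h4, h3⟩
  have hadj : ∀ p q, s(p, q) ∈ H → ¬ R p q := by
    rintro p q h ⟨M, h1, h2, h3, h4⟩
    exact gallai_adj H w ν hw hmax p q h M h1 h2 h3 h4
  have htr : ∀ t u v, t ≠ u → t ≠ v → u ≠ v → R u v → R t u ∨ R t v := by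
    rintro t u v h1 h2 h3 ⟨M, g1, g2, g3, g4⟩
    obtain ⟨M', k1, k2, k3, k4⟩ := gallai_trans H w ν hmax hmiss t u v h1 h2 h3 M g1 g2 g3 g4
    rcases k4 with k4 | k4
    · exact Or.inl ⟨M', k1, k2, k3, k4⟩
    · exact Or.inr ⟨M', k1, k2, k3, k4⟩
  set U : Finset V := Finset.univ.filter (fun v => v = a ∨ ¬ R a v) with hU
  have memU : ∀ v, v ∈ U ↔ (v = a ∨ ¬ R a v) := by simp [hU]
  have hclose : ∀ p q, s(p, q) ∈ H → p ∈ U → q ∈ U := by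
    intro p q hpq hp
    rw [memU] at hp ⊢
    by_contra hq
    push Not at hq
    obtain ⟨hqa, hRq⟩ := hq
    have n1 := hadj p q hpq
    by_cases hpa : p = a
    · subst hpa
      exact n1 hRq
    · have hp' := hp.resolve_left hpa
      by_cases hpq' : p = q
      · subst hpq'; exact hp' hRq
      rcases htr p a q hpa hpq' (Ne.symm hqa) hRq with h | h
      · exact hp' (hRs _ _ h)
      · exact n1 h
  refine ⟨U, (memU a).2 (Or.inl rfl), (memU b).2 (Or.inr (hadj a b hab)), ?_⟩
  intro M hM hMν
  set D := M.filter (fun e => ∀ v ∈ e, v ∈ U) with hD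
  rw [← Finset.card_filter_add_card_filter_not (s := U) (fun p => ∀ e ∈ M, p ∉ e)]
  have c1 : (U.filter (fun p => ∀ e ∈ M, p ∉ e)).card ≤ 1 := by
    rw [Finset.card_le_one]
    intro p hp q hq
    rw [Finset.mem_filter, memU] at hp hq
    by_contra hpq
    have hRpq : R p q := ⟨M, hM, hMν, hp.2, hq.2⟩
    by_cases hpa : p = a
    · subst hpa
      exact (hq.1.resolve_left (Ne.symm hpq)) hRpq
    by_cases hqa : q = a
    · subst hqa
      exact (hp.1.resolve_left hpq) (hRs _ _ hRpq)
    rcases htr a p q (Ne.symm hpa) (Ne.symm hqa) hpq hRpq with h | h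
    · exact hp.1.resolve_left hpa h
    · exact hq.1.resolve_left hqa h
  have c2 : (U.filter (fun p => ¬ ∀ e ∈ M, p ∉ e)).card ≤ 2 * D.card := by
    refine (Finset.card_le_card (t := D.biUnion Sym2.toFinset) ?_).trans ?_
    · intro p hp
      rw [Finset.mem_filter] at hp
      obtain ⟨hpU, hp2⟩ := hp
      push Not at hp2
      obtain ⟨e, he, hpe⟩ := hp2
      rw [Finset.mem_biUnion]
      refine ⟨e, ?_, by simpa using hpe⟩
      rw [hD, Finset.mem_filter]
      refine ⟨he, ?_⟩
      obtain ⟨q, rfl⟩ := Sym2.mem_iff_exists.1 hpe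
      intro v hv
      rw [Sym2.mem_iff] at hv
      rcases hv with rfl | rfl
      · exact hpU
      · exact hclose p _ (hM.1 he) hpU
    · refine (Finset.card_biUnion_le_card_mul D _ 2 ?_).trans_eq (mul_comm _ _)
      intro e _
      rw [Sym2.card_toFinset]
      split_ifs <;> omega
  omega
end comb

section edmonds
set_option linter.unusedSectionVars false
variable {V : Type*} [Fintype V] [DecidableEq V]

lemma edmonds_core (E : Finset (Sym2 V)) (x w0 : Sym2 V → ℝ) (hw0 : ∀ e, 0 ≤ w0 e)
    (hx : ∀ e, 0 ≤ x e)
    (hdeg : ∀ v : V, ∑ e ∈ E.filter (fun e => v ∈ e), x e ≤ 1)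
    (hodd : ∀ U : Finset V, U.Nonempty → ∑ e ∈ E.filter (fun e => ∀ v ∈ e, v ∈ U), x e ≤ ((U.card : ℝ) - 1) / 2)
    (δ : ℝ) (hδ : 0 < δ)
    (h0 : ∀ M, Mat E M → δ ≤ ∑ e ∈ E, w0 e * x e - ∑ e ∈ M, w0 e) : False := by
  set φ : Finset (Sym2 V) → (Sym2 V → ℝ) → ℝ := fun M w => ∑ e ∈ E, w e * x e - ∑ e ∈ M, w e with hφ
  have hφc : ∀ M, Continuous (φ M) := by intro M; simp only [hφ]; fun_prop
  set K : Set (Sym2 V → ℝ) := {w | w ∈ Set.Icc 0 w0 ∧ ∀ M, Mat E M → δ ≤ φ M w} with hK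
  have hKclosed : IsClosed K := by
    have hKe : K = Set.Icc 0 w0 ∩ ⋂ M, ⋂ (_ : Mat E M), {w | δ ≤ φ M w} := by
      ext w; simp [hK]
    rw [hKe]
    apply IsClosed.inter isClosed_Icc
    exact isClosed_iInter fun M => isClosed_iInter fun _ => isClosed_le continuous_const (hφc M)
  have hKc : IsCompact K := IsCompact.of_isClosed_subset (isCompact_Icc (a := (0 : Sym2 V → ℝ)) (b := w0)) hKclosed (fun w hw => hw.1)
  have hK0 : w0 ∈ K := ⟨⟨fun e => hw0 e, le_rfl⟩, h0⟩
  obtain ⟨w, hwK, hwmin⟩ := hKc.exists_isMinOn ⟨w0, hK0⟩ (f := fun w => ∑ e ∈ E, w e) (by fun_prop)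
  have hw : ∀ e, 0 ≤ w e := fun e => hwK.1.1 e
  set H := E.filter (fun e => 0 < w e) with hH
  have hHE : H ⊆ E := Finset.filter_subset _ _
  have hHw : ∀ e ∈ H, 0 < w e := fun e he => (Finset.mem_filter.1 he).2
  -- key perturbation claim
  have key : ∀ D ⊆ H, D.Nonempty → ∃ M, Mat E M ∧ φ M w = δ ∧ ((M ∩ D).card : ℝ) < ∑ e ∈ D, x e := by
    intro D hD hDn
    by_contra hcon
    push Not at hcon
    set p : ℝ → Sym2 V → ℝ := fun ε e => w e - ε * (if e ∈ D then 1 else 0) with hp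
    have hφp : ∀ M ε, φ M (p ε) = φ M w - ε * (∑ e ∈ D, x e - ((M ∩ D).card : ℝ)) := by
      intro M ε
      have e1 : ∑ e ∈ E, p ε e * x e = ∑ e ∈ E, w e * x e - ε * ∑ e ∈ D, x e := by
        have : ∑ e ∈ D, x e = ∑ e ∈ E, (if e ∈ D then x e else 0) := by
          rw [Finset.sum_ite_mem, Finset.inter_eq_right.2 (hD.trans hHE)]
        rw [this, Finset.mul_sum, ← Finset.sum_sub_distrib]
        apply Finset.sum_congr rfl
        intro e _
        simp only [hp]
        split_ifs <;> ring
      have e2 : ∑ e ∈ M, p ε e = ∑ e ∈ M, w e - ε * ((M ∩ D).card : ℝ) := by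
        simp only [hp, Finset.sum_sub_distrib, ← Finset.mul_sum, Finset.sum_ite_mem]
        simp
      simp only [hφ]
      rw [e1, e2]; ring
    have hev1 : ∀ᶠ ε : ℝ in nhdsWithin 0 (Set.Ioi 0), ∀ M ∈ (Finset.univ : Finset (Finset (Sym2 V))), Mat E M → δ ≤ φ M (p ε) := by
      rw [Filter.eventually_all_finset]
      intro M _
      by_cases hM : Mat E M
      · by_cases ht : φ M w = δ
        · filter_upwards [self_mem_nhdsWithin] with ε hε _
          have hε' : (0:ℝ) < ε := hε
          rw [hφp, ht]
          have := hcon M hM ht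
          nlinarith
        · have hlt : δ < φ M w := lt_of_le_of_ne (hwK.2 M hM) (Ne.symm ht)
          have hc : Continuous (fun ε : ℝ => φ M (p ε)) := by
            simp only [hφp]; fun_prop
          have := hc.continuousAt (x := 0) |>.eventually_const_lt (u := δ) (by simpa [hφp] using hlt)
          filter_upwards [nhdsWithin_le_nhds this] with ε hε _
          exact hε.le
      · exact Filter.Eventually.of_forall fun ε h => absurd h hM
    have hev2 : ∀ᶠ ε : ℝ in nhdsWithin 0 (Set.Ioi 0), ∀ e ∈ D, ε < w e := by
      rw [Filter.eventually_all_finset]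
      intro e he
      exact nhdsWithin_le_nhds (eventually_lt_nhds (hHw e (hD he)))
    obtain ⟨ε, h1, h2, h3⟩ := (hev1.and (hev2.and self_mem_nhdsWithin)).exists
    have hε : (0:ℝ) < ε := h3
    have hpK : p ε ∈ K := by
      refine ⟨⟨fun e => ?_, fun e => ?_⟩, fun M hM => h1 M (Finset.mem_univ _) hM⟩
      · simp only [hp, Pi.zero_apply]
        split_ifs with he
        · linarith [h2 e he]
        · linarith [hw e]
      · have := hwK.1.2 e
        simp only [hp]
        split_ifs with he <;> linarith
    have hle : ∑ e ∈ E, w e ≤ ∑ e ∈ E, p ε e := hwmin hpK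
    have : ∑ e ∈ E, p ε e = ∑ e ∈ E, w e - ε * D.card := by
      simp only [hp, Finset.sum_sub_distrib, ← Finset.mul_sum, Finset.sum_ite_mem]
      rw [Finset.inter_eq_right.2 (hD.trans hHE)]
      simp
    have hDc : (0:ℝ) < D.card := by exact_mod_cast hDn.card_pos
    nlinarith
  have hwz : ∀ e ∈ E, e ∉ H → w e = 0 := by
    intro e he heH
    by_contra hne
    exact heH (Finset.mem_filter.2 ⟨he, lt_of_le_of_ne (hw e) (Ne.symm hne)⟩)
  have hHn : H.Nonempty := by
    by_contra hne
    rw [Finset.not_nonempty_iff_eq_empty] at hne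
    have h1 := hwK.2 ∅ ⟨Finset.empty_subset _, by simp⟩
    have h2 : ∑ e ∈ E, w e * x e = 0 := Finset.sum_eq_zero fun e he => by
      rw [hwz e he (by simp [hne])]; simp
    simp only [hφ, h2, Finset.sum_empty] at h1
    linarith
  set ν := ∑ e ∈ E, w e * x e - δ with hν
  have hmax : ∀ M, Mat H M → ∑ e ∈ M, w e ≤ ν := by
    intro M hM
    have := hwK.2 M ⟨hM.1.trans hHE, hM.2⟩
    simp only [hφ] at this
    linarith
  have hrestr : ∀ M, Mat E M → φ M w = δ → Mat H (M ∩ H) ∧ ∑ e ∈ M ∩ H, w e = ν := by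
    intro M hM ht
    refine ⟨⟨Finset.inter_subset_right, fun v => ?_⟩, ?_⟩
    · exact (Finset.card_le_card (Finset.filter_subset_filter _ Finset.inter_subset_left)).trans (hM.2 v)
    · rw [Finset.sum_subset Finset.inter_subset_left (s₂ := M)]
      · simp only [hφ] at ht; linarith
      · intro e he he'
        exact hwz e (hM.1 he) (fun h => he' (Finset.mem_inter.2 ⟨he, h⟩))
  have hmiss : ∀ t, ∃ M, Mat H M ∧ ∑ e ∈ M, w e = ν ∧ ∀ e ∈ M, t ∉ e := by
    intro t
    by_cases hD : (H.filter (fun e => t ∈ e)).Nonempty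
    · obtain ⟨M, hM, ht, hlt⟩ := key _ (Finset.filter_subset _ _) hD
      obtain ⟨g1, g2⟩ := hrestr M hM ht
      refine ⟨_, g1, g2, ?_⟩
      intro e he hte
      have h1 : ∑ e ∈ H.filter (fun e => t ∈ e), x e ≤ 1 :=
        (Finset.sum_le_sum_of_subset_of_nonneg (Finset.filter_subset_filter _ hHE) (fun e _ _ => hx e)).trans (hdeg t)
      have h2 : (M ∩ H.filter (fun e => t ∈ e)).card < 1 := by exact_mod_cast hlt.trans_le h1
      rw [Finset.mem_inter] at he
      have h3 : e ∈ M ∩ H.filter (fun e => t ∈ e) := Finset.mem_inter.2 ⟨he.1, Finset.mem_filter.2 ⟨he.2, hte⟩⟩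
      have := Finset.card_pos.2 ⟨e, h3⟩
      omega
    · obtain ⟨M, hM, ht, -⟩ := key H subset_rfl hHn
      obtain ⟨g1, g2⟩ := hrestr M hM ht
      refine ⟨_, g1, g2, ?_⟩
      intro e he hte
      exact hD ⟨e, Finset.mem_filter.2 ⟨(Finset.mem_inter.1 he).2, hte⟩⟩
  obtain ⟨e0, he0⟩ := hHn
  induction e0 using Sym2.ind with
  | _ a b =>
    obtain ⟨U, haU, hbU, hU⟩ := gallai_class H w ν hHw hmax hmiss a b he0
    obtain ⟨M, hM, ht, hlt⟩ := key (H.filter (fun e => ∀ v ∈ e, v ∈ U)) (Finset.filter_subset _ _)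
      ⟨s(a, b), Finset.mem_filter.2 ⟨he0, by
        intro v hv
        rw [Sym2.mem_iff] at hv
        rcases hv with rfl | rfl <;> assumption⟩⟩
    obtain ⟨g1, g2⟩ := hrestr M hM ht
    have h1 := hU _ g1 g2
    have h2 : ∑ e ∈ H.filter (fun e => ∀ v ∈ e, v ∈ U), x e ≤ ((U.card : ℝ) - 1) / 2 :=
      (Finset.sum_le_sum_of_subset_of_nonneg (Finset.filter_subset_filter _ hHE) (fun e _ _ => hx e)).trans (hodd U ⟨a, haU⟩)
    have h3 : (M ∩ H).filter (fun e => ∀ v ∈ e, v ∈ U) = M ∩ H.filter (fun e => ∀ v ∈ e, v ∈ U) := by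
      ext e; simp only [Finset.mem_filter, Finset.mem_inter, and_assoc]
    rw [h3] at h1
    have h4 : (U.card : ℝ) ≤ 1 + 2 * ((M ∩ H.filter (fun e => ∀ v ∈ e, v ∈ U)).card : ℝ) := by exact_mod_cast h1
    linarith

lemma edmonds (G : SimpleGraph V) (x : Sym2 V → ℝ) (hx : ∀ e, 0 ≤ x e)
    (hsupp : ∀ e, e ∉ G.edgeFinset → x e = 0)
    (hdeg : ∀ v : V, ∑ e ∈ G.edgeFinset.filter (fun e => v ∈ e), x e ≤ 1)
    (hodd : ∀ U : Finset V, U.Nonempty → ∑ e ∈ G.edgeFinset.filter (fun e => ∀ v ∈ e, v ∈ U), x e ≤ ((U.card : ℝ) - 1) / 2) :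
    x ∈ RCurv.matchingPolytope G := by
  by_contra hnot
  have hfin : {y : Sym2 V → ℝ | ∃ M : Finset (Sym2 V), RCurv.IsMatching' G M ∧ y = RCurv.indVec M}.Finite := by
    apply (Set.finite_range (RCurv.indVec (V := V))).subset
    rintro y ⟨M, -, rfl⟩
    exact ⟨M, rfl⟩
  obtain ⟨f, u, hf1, hf2⟩ := geometric_hahn_banach_closed_point (convex_convexHull ℝ _)
    (hfin.isClosed_convexHull ℝ) hnot
  have hfsum : ∀ y : Sym2 V → ℝ, f y = ∑ e, y e * f (Pi.single e 1) := by
    intro y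
    conv_lhs => rw [pi_eq_sum_univ' y]
    simp [map_sum, map_smul]
  refine edmonds_core G.edgeFinset x (fun e => max (f (Pi.single e 1)) 0) (fun e => le_max_right _ _) hx hdeg hodd
    (f x - u) (by linarith) ?_
  intro M hM
  have h1 : f x ≤ ∑ e ∈ G.edgeFinset, max (f (Pi.single e 1)) 0 * x e := by
    rw [hfsum, ← Finset.sum_subset (Finset.subset_univ G.edgeFinset)]
    · apply Finset.sum_le_sum
      intro e _
      rw [mul_comm]
      exact mul_le_mul_of_nonneg_right (le_max_left _ _) (hx e)
    · intro e _ he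
      rw [hsupp e he]; simp
  have h2 : ∑ e ∈ M, max (f (Pi.single e 1)) 0 = f (RCurv.indVec (M.filter (fun e => 0 < f (Pi.single e 1)))) := by
    rw [hfsum]
    simp only [RCurv.indVec, ite_mul, one_mul, zero_mul, Finset.sum_ite_mem, Finset.univ_inter]
    rw [Finset.sum_filter]
    apply Finset.sum_congr rfl
    intro e _
    split_ifs with h
    · exact max_eq_left h.le
    · exact max_eq_right (not_lt.1 h)
  have h3 : f (RCurv.indVec (M.filter (fun e => 0 < f (Pi.single e 1)))) < u := by
    apply hf1
    apply subset_convexHull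
    refine ⟨_, ⟨?_, ?_⟩, rfl⟩
    · intro e he
      have := hM.1 (Finset.mem_filter.1 (Finset.mem_coe.1 he)).1
      simpa using this
    · intro v
      exact (Finset.card_le_card (Finset.filter_subset_filter _ (Finset.filter_subset _ _))).trans (hM.2 v)
  rw [h2]
  linarith
end edmonds

section final
set_option linter.unusedSectionVars false
open RCurv
variable {V : Type*} [Fintype V] [DecidableEq V]

lemma stPolytope_eq (G : SimpleGraph V) :
    stPolytope G = convexHull ℝ (Set.range (fun i : {T // T ∈ spanningTrees G} => indVec i.1)) := by
  unfold stPolytope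
  congr 1
  ext x
  constructor
  · rintro ⟨T, hT, rfl⟩
    exact ⟨⟨T, hT⟩, rfl⟩
  · rintro ⟨⟨T, hT⟩, rfl⟩
    exact ⟨T, hT, rfl⟩

lemma trees_nonempty (G : SimpleGraph V) (hG : G.Connected) :
    Nonempty {T // T ∈ spanningTrees G} := by
  obtain ⟨T, hTG, hT⟩ := hG.exists_isTree_le
  refine ⟨⟨T.edgeFinset, ?_⟩⟩
  rw [spanningTrees, Finset.mem_filter]
  refine ⟨Finset.mem_univ _, ?_, ?_⟩
  · rw [SimpleGraph.coe_edgeFinset]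
    exact SimpleGraph.edgeSet_mono hTG
  · rw [SimpleGraph.coe_edgeFinset, SimpleGraph.fromEdgeSet_edgeSet]
    exact hT

lemma relRes_eq (G : SimpleGraph V) (c : Sym2 V → ℝ) (e : Sym2 V) :
    relRes G c e = ∑ i : {T // T ∈ spanningTrees G},
      ((∏ t ∈ i.1, c t) / (∑ j : {T // T ∈ spanningTrees G}, ∏ t ∈ j.1, c t)) * indVec i.1 e := by
  unfold relRes
  rw [Finset.sum_coe_sort (spanningTrees G) (fun T => ∏ t ∈ T, c t), Finset.sum_filter, Finset.sum_div,
    Finset.sum_coe_sort (spanningTrees G) (fun T => (∏ t ∈ T, c t) / (∑ T ∈ spanningTrees G, ∏ t ∈ T, c t) * indVec T e)]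
  apply Finset.sum_congr rfl
  intro T _
  simp only [indVec]
  split_ifs <;> simp

lemma star_sum (G : SimpleGraph V) (f : Sym2 V → ℝ) (v : V) :
    ∑ e ∈ G.edgeFinset.filter (fun e => v ∈ e), f e = ∑ u ∈ G.neighborFinset v, f s(u, v) := by
  symm
  apply Finset.sum_bij (fun u _ => s(u, v))
  · intro u hu
    rw [SimpleGraph.mem_neighborFinset] at hu
    rw [Finset.mem_filter, SimpleGraph.mem_edgeFinset, SimpleGraph.mem_edgeSet]
    exact ⟨hu.symm, by simp⟩
  · intro u _ u' _ h
    exact Sym2.congr_left.1 h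
  · intro e he
    rw [Finset.mem_filter] at he
    obtain ⟨u, rfl⟩ := Sym2.mem_iff_exists.1 he.2
    refine ⟨u, ?_, Sym2.eq_swap⟩
    have := he.1
    rw [SimpleGraph.mem_edgeFinset, SimpleGraph.mem_edgeSet] at this
    rwa [SimpleGraph.mem_neighborFinset]
  · intro u _
    rfl

lemma matching_star (G : SimpleGraph V) (m : Sym2 V → ℝ) (hm : m ∈ matchingPolytope G) (v : V) :
    ∑ u ∈ G.neighborFinset v, m s(u, v) ≤ 1 := by
  have hsub : matchingPolytope G ⊆ {m | ∑ u ∈ G.neighborFinset v, m s(u, v) ≤ 1} := by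
    apply convexHull_min
    · rintro _ ⟨M, hM, rfl⟩
      show ∑ u ∈ G.neighborFinset v, indVec M s(u, v) ≤ 1
      rw [← star_sum G (indVec M) v]
      simp only [indVec, Finset.sum_ite_mem, Finset.sum_const, nsmul_eq_mul, mul_one]
      have : (G.edgeFinset.filter (fun e => v ∈ e) ∩ M).card ≤ 1 := by
        refine (Finset.card_le_card ?_).trans (hM.2 v)
        intro e he
        simp only [Finset.mem_inter, Finset.mem_filter] at he ⊢
        exact ⟨he.2, he.1.2⟩
      exact_mod_cast this
    · apply convex_halfSpace_le
      constructor
      · intro p q; simp [Finset.sum_add_distrib]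
      · intro k p; simp [Finset.mul_sum]
  exact hsub hm

lemma forward (G : SimpleGraph V) (hG : G.Connected) (c : Sym2 V → ℝ)
    (hc : ∀ e ∈ G.edgeSet, 0 < c e) (hcurv : ∀ v, 0 ≤ curv G c v) :
    relRes G c ∈ intrinsicInterior ℝ (stPolytope G) ∧ (2⁻¹ : ℝ) • relRes G c ∈ matchingPolytope G := by
  have := trees_nonempty G hG
  have htree : ∀ i : {T // T ∈ spanningTrees G}, IsSpanningTree G i.1 := fun i =>
    (Finset.mem_filter.1 i.2).2
  have hprod : ∀ i : {T // T ∈ spanningTrees G}, 0 < ∏ t ∈ i.1, c t := fun i =>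
    Finset.prod_pos fun t ht => hc t ((htree i).1 ht)
  set Z := ∑ j : {T // T ∈ spanningTrees G}, ∏ t ∈ j.1, c t with hZ
  have hZ0 : 0 < Z := Finset.sum_pos (fun i _ => hprod i) Finset.univ_nonempty
  set w : {T // T ∈ spanningTrees G} → ℝ := fun i => (∏ t ∈ i.1, c t) / Z with hw
  have hw0 : ∀ i, 0 < w i := fun i => div_pos (hprod i) hZ0
  have hw1 : ∑ i, w i = 1 := by
    simp only [hw]; rw [← Finset.sum_div]; exact div_self hZ0.ne'
  have hr : ∀ e, relRes G c e = ∑ i, w i * indVec i.1 e := fun e => relRes_eq G c e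
  have hr' : relRes G c = ∑ i, w i • indVec i.1 := by
    ext e; rw [hr]; simp [Finset.sum_apply]
  have hind0 : ∀ (T : Finset (Sym2 V)) e, 0 ≤ indVec T e := by
    intro T e; simp only [indVec]; split_ifs <;> simp
  refine ⟨?_, ?_⟩
  · rw [stPolytope_eq, hr']
    exact pos_relint _ w hw0 hw1
  · apply edmonds
    · intro e
      simp only [Pi.smul_apply, smul_eq_mul, hr]
      apply mul_nonneg (by norm_num)
      exact Finset.sum_nonneg fun i _ => mul_nonneg (hw0 i).le (hind0 _ _)
    · intro e he
      simp only [Pi.smul_apply, smul_eq_mul, hr]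
      rw [Finset.sum_eq_zero, mul_zero]
      intro i _
      have : e ∉ i.1 := fun h => he (by rw [SimpleGraph.mem_edgeFinset]; exact (htree i).1 h)
      simp [indVec, this]
    · intro v
      have h := hcurv v
      simp only [Pi.smul_apply, smul_eq_mul]
      rw [← Finset.mul_sum, star_sum]
      unfold curv at h
      linarith
    · intro U hU
      simp only [Pi.smul_apply, smul_eq_mul]
      rw [← Finset.mul_sum]
      have : ∑ e ∈ G.edgeFinset.filter (fun e => ∀ v ∈ e, v ∈ U), relRes G c e ≤ (U.card : ℝ) - 1 := by
        simp only [hr]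
        rw [Finset.sum_comm]
        calc _ ≤ ∑ i, w i * ((U.card : ℝ) - 1) := by
              apply Finset.sum_le_sum
              intro i _
              rw [← Finset.mul_sum]
              apply mul_le_mul_of_nonneg_left _ (hw0 i).le
              simp only [indVec, Finset.sum_ite_mem, Finset.sum_const, nsmul_eq_mul, mul_one]
              have h1 := tree_bound G i.1 (htree i) U hU
              have h2 : (G.edgeFinset.filter (fun e => ∀ v ∈ e, v ∈ U) ∩ i.1).card ≤ (i.1.filter (fun e => ∀ v ∈ e, v ∈ U)).card := by
                apply Finset.card_le_card
                intro e he
                simp only [Finset.mem_inter, Finset.mem_filter] at he ⊢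
                exact ⟨he.2, he.1.2⟩
              have h3 : ((G.edgeFinset.filter (fun e => ∀ v ∈ e, v ∈ U) ∩ i.1).card : ℝ) + 1 ≤ U.card := by
                exact_mod_cast (Nat.add_le_add_right h2 1).trans h1
              linarith
          _ = _ := by rw [← Finset.sum_mul, hw1, one_mul]
      linarith

lemma backward (G : SimpleGraph V) (hG : G.Connected) (x : Sym2 V → ℝ)
    (hx : x ∈ intrinsicInterior ℝ (stPolytope G)) :
    ∃ c : Sym2 V → ℝ, (∀ e, 0 < c e) ∧ ∀ e, relRes G c e = x e := by
  have := trees_nonempty G hG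
  rw [stPolytope_eq] at hx
  obtain ⟨w, hw, hw1, rfl⟩ := relint_pos _ _ hx
  obtain ⟨θ, hθ⟩ := gibbs (fun i : {T // T ∈ spanningTrees G} => indVec i.1) w hw hw1
  refine ⟨fun e => Real.exp (θ e), fun e => Real.exp_pos _, fun e => ?_⟩
  have hW : ∀ i : {T // T ∈ spanningTrees G}, Real.exp (∑ j, θ j * indVec i.1 j) = ∏ t ∈ i.1, Real.exp (θ t) := by
    intro i
    rw [← Real.exp_sum]
    congr 1
    simp [indVec]
  have h := hθ e
  simp only [hW, mul_sub, Finset.sum_sub_distrib] at h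
  rw [← Finset.sum_mul, sub_eq_zero] at h
  rw [relRes_eq]
  have hZ0 : 0 < ∑ j : {T // T ∈ spanningTrees G}, ∏ t ∈ j.1, Real.exp (θ t) :=
    Finset.sum_pos (fun i _ => Finset.prod_pos fun t _ => Real.exp_pos _) Finset.univ_nonempty
  simp only [div_mul_eq_mul_div]
  rw [← Finset.sum_div, h, mul_div_cancel_left₀ _ hZ0.ne']
  simp [Finset.sum_apply]
end final

end RCurvProof

open scoped Pointwise in
open RCurv in
/-- A graph is resistance nonnegative iff the relative interior of its spanning tree polytope
intersects its twice-dilated matching polytope. -/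
theorem isRN_iff_inter_matchingPolytope {V : Type*} [Fintype V] [DecidableEq V]
    (G : SimpleGraph V) (hG : G.Connected) :
    IsRN G ↔
      (intrinsicInterior ℝ (stPolytope G) ∩ (2 : ℝ) • matchingPolytope G).Nonempty := by
  constructor
  · rintro ⟨c, hc, hcurv⟩
    obtain ⟨h1, h2⟩ := RCurvProof.forward G hG c hc hcurv
    refine ⟨relRes G c, h1, Set.mem_smul_set.2 ⟨_, h2, ?_⟩⟩
    rw [smul_smul]
    norm_num
  · rintro ⟨x, hx, hx2⟩
    obtain ⟨m, hm, rfl⟩ := Set.mem_smul_set.1 hx2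
    obtain ⟨c, hc, hr⟩ := RCurvProof.backward G hG _ hx
    refine ⟨c, fun e _ => hc e, fun v => ?_⟩
    have h := RCurvProof.matching_star G m hm v
    unfold curv
    simp only [hr, Pi.smul_apply, smul_eq_mul]
    rw [← Finset.mul_sum]
    linarith
end

section
/- Every finite simple connected loopless graph G that is resistance nonnegative (RN) has a matching of size ⌊|V|/2⌋, i.e. a perfect matching if |V| is even and a near-perfect matching (covering all but one vertex) if |V| is odd. -/
open scoped Classical

section Helpers

universe u

/-- Quotienting a connected graph of small degree sum on `S`. -/
lemma card_image_le_of_tree {V C : Type u} [Fintype V] (T : SimpleGraph V) (hT : T.Connected)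
    (S : Finset V) (f : V → C)
    (hf : ∀ u v, u ∉ S → v ∉ S → T.Adj u v → f u = f v)
    (hdeg : ∑ v ∈ S, (Finset.univ.filter (fun u => T.Adj v u)).card ≤ 2 * S.card) :
    (Sᶜ.image f).card ≤ S.card + 1 := by
  set R : Finset (V ⊕ C) := S.disjSum (Sᶜ.image f) with hR
  have hmem : ∀ v, (if v ∈ S then Sum.inl v else Sum.inr (f v) : V ⊕ C) ∈ R := by
    intro v
    by_cases hv : v ∈ S
    · simp [hR, hv]
    · simp only [hR, hv, if_false, Finset.inr_mem_disjSum]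
      exact Finset.mem_image_of_mem _ (by simpa using hv)
  let g : V → ↥R := fun v => ⟨_, hmem v⟩
  have hgsurj : Function.Surjective g := by
    rintro ⟨x | x, hx⟩
    · have hx' : x ∈ S := by simpa [hR] using hx
      exact ⟨x, Subtype.ext (by simp [g, hx'])⟩
    · have hx' : x ∈ Sᶜ.image f := by simpa [hR] using hx
      obtain ⟨v, hv, rfl⟩ := Finset.mem_image.1 hx'
      have hv' : v ∉ S := by simpa using hv
      exact ⟨v, Subtype.ext (by simp [g, hv'])⟩
  let H : SimpleGraph ↥R := SimpleGraph.fromRel (fun a b => ∃ u v, T.Adj u v ∧ g u = a ∧ g v = b)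
  have hadj : ∀ u v, T.Adj u v → H.Reachable (g u) (g v) := by
    intro u v huv
    by_cases h : g u = g v
    · rw [h]
    · exact SimpleGraph.Adj.reachable
        ((SimpleGraph.fromRel_adj _ _ _).2 ⟨h, Or.inl ⟨u, v, huv, rfl, rfl⟩⟩)
  have hreach : ∀ u v, T.Reachable u v → H.Reachable (g u) (g v) := by
    rintro u v ⟨p⟩
    induction p with
    | nil => exact SimpleGraph.Reachable.refl _
    | cons h _ ih => exact (hadj _ _ h).trans ih
  have hH : H.Connected := by
    have hne := hT.nonempty
    have : Nonempty ↥R := hne.map g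
    refine SimpleGraph.Connected.mk ?_
    intro a b
    obtain ⟨u, rfl⟩ := hgsurj a
    obtain ⟨v, rfl⟩ := hgsurj b
    exact hreach u v (hT.preconnected u v)
  have h1 := hH.card_vert_le_card_edgeSet_add_one
  have hcardR : Nat.card ↥R = S.card + (Sᶜ.image f).card := by
    rw [Nat.card_eq_fintype_card, Fintype.card_coe, hR, Finset.card_disjSum]
  let E : Finset (Sym2 ↥R) :=
    (S.sigma (fun v => Finset.univ.filter (fun u => T.Adj v u))).image
      (fun x => s(g x.1, g x.2))
  have hE : H.edgeSet ⊆ (E : Set (Sym2 ↥R)) := by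
    have key : ∀ u v, T.Adj u v → g u ≠ g v → s(g u, g v) ∈ E := by
      intro u v huv hne
      by_cases hu : u ∈ S
      · exact Finset.mem_image.2 ⟨⟨u, v⟩, by simp [hu, huv], rfl⟩
      · by_cases hv : v ∈ S
        · exact Finset.mem_image.2 ⟨⟨v, u⟩, by simp [hv, huv.symm], Sym2.eq_swap⟩
        · exact absurd (Subtype.ext (by simp [g, hu, hv, hf u v hu hv huv])) hne
    intro e
    induction e with
    | _ a b =>
      intro he
      obtain ⟨hne, h | h⟩ := (SimpleGraph.fromRel_adj _ _ _).1 (SimpleGraph.mem_edgeSet _ |>.1 he)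
      · obtain ⟨u, v, huv, rfl, rfl⟩ := h
        exact key u v huv hne
      · obtain ⟨u, v, huv, rfl, rfl⟩ := h
        rw [Sym2.eq_swap]
        exact key u v huv hne.symm
  have h2 : Nat.card H.edgeSet ≤ E.card := by
    rw [← Set.ncard_coe_finset E]
    exact Set.ncard_le_ncard hE (Finset.finite_toSet E)
  have h3 : E.card ≤ 2 * S.card := by
    refine Finset.card_image_le.trans ?_
    rw [Finset.card_sigma]
    exact hdeg
  omega

/-- The toughness condition. -/
def Tough {W : Type u} [Fintype W] (H : SimpleGraph W) : Prop :=
  ∀ (C : Type u) (S : Finset W) (f : W → C),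
    (∀ u v, u ∉ S → v ∉ S → H.Adj u v → f u = f v) → (Sᶜ.image f).card ≤ S.card + 1

lemma Tough.exists_perfect {W : Type u} [Fintype W] (H : SimpleGraph W) (hH : Tough H)
    (hW : Even (Fintype.card W)) : ∃ p : W → W, (∀ w, H.Adj w (p w)) ∧ ∀ w, p (p w) = w := by
  have : ∃ M : H.Subgraph, M.IsPerfectMatching := by
    rw [SimpleGraph.tutte]
    intro U hU
    unfold SimpleGraph.IsTutteViolator at hU
    set K := ((⊤ : H.Subgraph).deleteVerts U) with hK
    have hverts : K.verts = Uᶜ := by simp [hK, Set.compl_eq_univ_sdiff]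
    have hpar := K.coe.odd_ncard_oddComponents
    have hc : Nat.card K.verts = Uᶜ.ncard := by rw [hverts]; rfl
    have hsum : U.ncard + Uᶜ.ncard = Fintype.card W := by
      rw [Set.ncard_add_ncard_compl, Nat.card_eq_fintype_card]
    let f : W → Option K.coe.ConnectedComponent := fun w =>
      if h : w ∈ K.verts then some (K.coe.connectedComponentMk ⟨w, h⟩) else none
    have hmv : ∀ w, w ∈ K.verts ↔ w ∉ U.toFinset := by
      intro w; rw [hverts]; simp
    have ht := hH _ U.toFinset f (by
      intro a b ha hb hab
      have ha' := (hmv a).2 ha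
      have hb' := (hmv b).2 hb
      simp only [f, ha', hb', dif_pos]
      congr 1
      apply SimpleGraph.ConnectedComponent.sound
      apply SimpleGraph.Adj.reachable
      have h1 : a ∉ U := by simpa using ha
      have h2 : b ∉ U := by simpa using hb
      simp [hK, h1, h2, hab])
    have hle : K.coe.oddComponents.ncard ≤ (U.toFinsetᶜ.image f).card := by
      rw [← Set.ncard_coe_finset]
      refine Set.ncard_le_ncard_of_injOn some ?_ (Option.some_injective _).injOn
        (Finset.finite_toSet _)
      intro c _
      induction c using SimpleGraph.ConnectedComponent.ind with
      | _ v =>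
        obtain ⟨v, hv⟩ := v
        simp only [Finset.coe_image, Set.mem_image]
        refine ⟨v, ?_, by simp [f, hv]⟩
        simpa using (hmv v).1 hv
    have hUc : U.toFinset.card = U.ncard := (Set.ncard_eq_toFinset_card' U).symm
    rw [hc] at hpar
    have hle' := hle.trans (le_of_eq_of_le (by congr!) ht)
    have hq : K.coe.oddComponents.ncard = U.ncard + 1 := by omega
    rw [hq] at hpar
    grind
  obtain ⟨M, hM⟩ := this
  rw [SimpleGraph.Subgraph.isPerfectMatching_iff] at hM
  choose p hp hu using hM
  refine ⟨p, fun w => (hp w).adj_sub, fun w => ?_⟩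
  exact (hu (p w) w (hp w).symm).symm

lemma exists_matching_of_involution {V : Type u} [Fintype V] [DecidableEq V] (G : SimpleGraph V)
    (A : Finset V) (p : V → V) (hA : ∀ v ∈ A, p v ∈ A) (hp : ∀ v ∈ A, p (p v) = v)
    (hG : ∀ v ∈ A, G.Adj v (p v)) :
    ∃ M : Finset (Sym2 V), RCurv.IsMatching' G M ∧ M.card = A.card / 2 := by
  have hpp : ∀ v ∈ A, ∀ w ∈ A, w ∈ s(v, p v) → s(v, p v) = s(w, p w) := by
    intro v hv w _ h
    rcases Sym2.mem_iff.1 h with rfl | rfl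
    · rfl
    · rw [hp v hv, Sym2.eq_swap]
  have hcard : A.card = (A.image (fun v => s(v, p v))).card * 2 := by
    rw [Finset.card_eq_sum_card_image (fun v => s(v, p v)) A]
    apply Finset.sum_const_nat
    intro e he
    obtain ⟨v, hv, rfl⟩ := Finset.mem_image.1 he
    rw [← Finset.card_pair (hG v hv).ne]
    congr 1
    ext w
    simp only [Finset.mem_filter, Finset.mem_insert, Finset.mem_singleton]
    constructor
    · rintro ⟨_, h⟩
      have : w ∈ s(v, p v) := by rw [← h]; exact Sym2.mem_mk_left _ _
      exact Sym2.mem_iff.1 this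
    · intro h
      have hw : w ∈ A := by
        rcases h with rfl | rfl
        · exact hv
        · exact hA v hv
      exact ⟨hw, (hpp v hv w hw (Sym2.mem_iff.2 h)).symm⟩
  refine ⟨A.image (fun v => s(v, p v)), ⟨?_, ?_⟩, by omega⟩
  · intro e he
    obtain ⟨v, hv, rfl⟩ := Finset.mem_image.1 (Finset.mem_coe.1 he)
    exact hG v hv
  · intro w
    have key : ∀ e ∈ (A.image (fun v => s(v, p v))).filter (fun e => w ∈ e), e = s(w, p w) := by
      intro e he
      obtain ⟨he, hw⟩ := Finset.mem_filter.1 he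
      obtain ⟨v, hv, rfl⟩ := Finset.mem_image.1 he
      have hwA : w ∈ A := by
        rcases Sym2.mem_iff.1 hw with rfl | rfl
        · exact hv
        · exact hA v hv
      exact hpp v hv w hwA hw
    refine Finset.card_le_one.2 fun a ha b hb => ?_
    exact (key a (by convert ha)).trans (key b (by convert hb)).symm

open RCurv in
lemma exists_tree_of_isRN {V : Type u} [Fintype V] [DecidableEq V] (G : SimpleGraph V)
    (hG : G.Connected) (hRN : IsRN G) (S : Finset V) :
    ∃ T : SimpleGraph V, T.Connected ∧ T ≤ G ∧
      ∑ v ∈ S, (Finset.univ.filter (fun u => T.Adj v u)).card ≤ 2 * S.card := by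
  obtain ⟨c, hc, hcurv⟩ := hRN
  have hwpos : ∀ T ∈ spanningTrees G, 0 < ∏ t ∈ T, c t := by
    intro T hT
    have hT' : IsSpanningTree G T := by simpa [spanningTrees] using hT
    exact Finset.prod_pos fun t ht => hc t (hT'.1 ht)
  have hne : (spanningTrees G).Nonempty := by
    obtain ⟨F, hF, hFT⟩ := hG.exists_isTree_le
    refine ⟨F.edgeSet.toFinset, ?_⟩
    simp only [spanningTrees, Finset.mem_filter, Finset.mem_univ, true_and]
    refine ⟨by simpa using SimpleGraph.edgeSet_mono hF, ?_⟩
    simpa using hFT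
  let D : Finset (Sym2 V) → ℕ := fun T =>
    ∑ v ∈ S, ((G.neighborFinset v).filter (fun u => s(u, v) ∈ T)).card
  set Z := ∑ T ∈ spanningTrees G, ∏ t ∈ T, c t with hZ
  have hZpos : 0 < Z := Finset.sum_pos hwpos hne
  have hsum : ∑ T ∈ spanningTrees G, (∏ t ∈ T, c t) * (D T : ℝ)
      = Z * ∑ v ∈ S, ∑ u ∈ G.neighborFinset v, relRes G c s(u, v) := by
    simp only [D, Nat.cast_sum, Finset.mul_sum, Finset.card_filter]
    rw [Finset.sum_comm]
    refine Finset.sum_congr rfl fun v _ => ?_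
    rw [Finset.sum_comm]
    refine Finset.sum_congr rfl fun u _ => ?_
    rw [relRes, ← hZ, mul_div_cancel₀ _ hZpos.ne', Finset.sum_filter]
    refine Finset.sum_congr rfl fun T _ => ?_
    split_ifs <;> simp
  have hle : ∑ v ∈ S, ∑ u ∈ G.neighborFinset v, relRes G c s(u, v) ≤ 2 * S.card := by
    calc _ ≤ ∑ v ∈ S, (2 : ℝ) := Finset.sum_le_sum fun v _ => by
            have := hcurv v
            unfold curv at this
            linarith
      _ = 2 * S.card := by simp [mul_comm]
  have hex : ∃ T ∈ spanningTrees G, D T ≤ 2 * S.card := by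
    by_contra! hcon
    have h1 : ∑ T ∈ spanningTrees G, (∏ t ∈ T, c t) * (2 * S.card : ℝ)
        < ∑ T ∈ spanningTrees G, (∏ t ∈ T, c t) * (D T : ℝ) := by
      refine Finset.sum_lt_sum_of_nonempty hne fun T hT => ?_
      refine mul_lt_mul_of_pos_left ?_ (hwpos T hT)
      exact_mod_cast hcon T hT
    rw [hsum, ← Finset.sum_mul, ← hZ] at h1
    exact absurd (lt_of_mul_lt_mul_left h1 hZpos.le) (not_lt.2 hle)
  obtain ⟨T, hT, hD⟩ := hex
  have hT' : IsSpanningTree G T := by simpa [spanningTrees] using hT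
  refine ⟨SimpleGraph.fromEdgeSet (T : Set (Sym2 V)), hT'.2.connected, ?_, ?_⟩
  · intro a b hab
    exact hT'.1 ((SimpleGraph.fromEdgeSet_adj _).1 hab).1
  · refine le_trans (Finset.sum_le_sum fun v _ => Finset.card_le_card ?_) hD
    intro u hu
    obtain ⟨h1, h2⟩ := (SimpleGraph.fromEdgeSet_adj _).1 (by simpa only [Finset.mem_filter, Finset.mem_univ, true_and] using hu)
    have hadj : G.Adj v u := hT'.1 h1
    rw [Finset.mem_filter, SimpleGraph.mem_neighborFinset]
    exact ⟨hadj, by rw [Sym2.eq_swap]; exact h1⟩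

lemma tough_of_isRN {V : Type u} [Fintype V] [DecidableEq V] (G : SimpleGraph V)
    (hG : G.Connected) (hRN : RCurv.IsRN G) : Tough G := by
  intro C S f hf
  obtain ⟨T, hT, hle, hdeg⟩ := exists_tree_of_isRN G hG hRN S
  have := card_image_le_of_tree T hT S f (fun u v hu hv h => hf u v hu hv (hle h)) hdeg
  convert this

/-- The graph with a universal vertex `none` added. -/
def cone {V : Type u} (G : SimpleGraph V) : SimpleGraph (Option V) :=
  SimpleGraph.fromRel (fun a b => a = none ∨ ∃ u v, a = some u ∧ b = some v ∧ G.Adj u v)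

lemma cone_some {V : Type u} (G : SimpleGraph V) (u v : V) :
    (cone G).Adj (some u) (some v) ↔ G.Adj u v := by
  simp only [cone, SimpleGraph.fromRel_adj]
  constructor
  · rintro ⟨-, h | h⟩
    · simpa using h
    · simpa [G.adj_comm] using h
  · intro h
    exact ⟨by simpa using h.ne, Or.inl (Or.inr ⟨u, v, rfl, rfl, h⟩)⟩

lemma tough_cone {V : Type u} [Fintype V] (G : SimpleGraph V) (hG : Tough G) :
    Tough (cone G) := by
  intro C S f hf
  by_cases hS : none ∈ S
  · have h := hG C (Finset.univ.filter (fun v => some v ∈ S)) (fun v => f (some v)) (by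
      intro u v hu hv h
      exact hf _ _ (by simpa using hu) (by simpa using hv) ((cone_some G u v).2 h))
    have h1 : (Finset.univ.filter (fun v : V => some v ∈ S)).card ≤ S.card :=
      Finset.card_le_card_of_injOn some (by intro v hv; simpa using hv)
        (Option.some_injective _).injOn
    refine le_trans (Finset.card_le_card ?_) (h.trans (by omega))
    intro x hx
    obtain ⟨w, hw, rfl⟩ := Finset.mem_image.1 hx
    have hw' : w ∉ S := by simpa using hw
    cases w with
    | none => exact absurd hS hw'
    | some v => exact Finset.mem_image.2 ⟨v, by simpa using hw', rfl⟩
  · have : (Sᶜ.image f).card ≤ 1 := by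
      have key : ∀ x ∈ Sᶜ.image f, x = f none := by
        intro x hx
        obtain ⟨w, hw, rfl⟩ := Finset.mem_image.1 hx
        cases w with
        | none => rfl
        | some v =>
          refine (hf none (some v) hS (by simpa using hw) ?_).symm
          simp [cone]
      exact Finset.card_le_one.2 fun a ha b hb => (key a ha).trans (key b hb).symm
    exact le_trans (le_of_eq_of_le (by congr!) this) (Nat.le_add_left _ _)

end Helpers

open RCurv in
/-- Every resistance nonnegative graph has a matching of size `⌊|V|/2⌋`, i.e. a perfect or
near-perfect matching. -/
theorem isRN_exists_nearPerfect_matching {V : Type*} [Fintype V] [DecidableEq V]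
    (G : SimpleGraph V) (hG : G.Connected) (hRN : IsRN G) :
    ∃ M : Finset (Sym2 V), IsMatching' G M ∧ M.card = Fintype.card V / 2 := by
  have hT := tough_of_isRN G hG hRN
  rcases Nat.even_or_odd (Fintype.card V) with hev | hodd
  · obtain ⟨p, hp, hpp⟩ := hT.exists_perfect G hev
    exact exists_matching_of_involution G Finset.univ p (by simp) (fun v _ => hpp v)
      (fun v _ => hp v)
  · have hcard : Even (Fintype.card (Option V)) := by
      rw [Fintype.card_option]; exact hodd.add_one
    obtain ⟨p, hp, hpp⟩ := (tough_cone G hT).exists_perfect _ hcard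
    obtain ⟨v0, hv0⟩ : ∃ v0, p none = some v0 := by
      have := (hp none).ne
      cases h : p none with
      | none => exact absurd h.symm this
      | some v => exact ⟨v, rfl⟩
    have hv0' : p (some v0) = none := by rw [← hv0, hpp]
    have hsome : ∀ v ∈ Finset.univ.erase v0, p (some v) = some ((p (some v)).getD v) := by
      intro v hv
      cases h : p (some v) with
      | some w => rfl
      | none =>
        have h1 := hpp (some v)
        rw [h, hv0] at h1
        exact absurd (Option.some.inj h1).symm (Finset.ne_of_mem_erase hv)
    have hA : ∀ v ∈ Finset.univ.erase v0, (p (some v)).getD v ∈ Finset.univ.erase v0 := by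
      intro v hv
      refine Finset.mem_erase.2 ⟨fun h => ?_, Finset.mem_univ _⟩
      have h1 := hsome v hv
      rw [h] at h1
      have h2 := hpp (some v)
      rw [h1, hv0'] at h2
      exact absurd h2 (by simp)
    obtain ⟨M, hM, hc⟩ := exists_matching_of_involution G (Finset.univ.erase v0)
      (fun v => (p (some v)).getD v) hA
      (by
        intro v hv
        apply Option.some.inj
        rw [← hsome _ (hA v hv), ← hsome v hv, hpp])
      (by
        intro v hv
        rw [← cone_some, ← hsome v hv]
        exact hp _)
    refine ⟨M, hM, ?_⟩
    rw [hc, Finset.card_erase_of_mem (Finset.mem_univ _), Finset.card_univ]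
    obtain ⟨k, hk⟩ := hodd
    omega
end

section
/- Let G = (V, E) be a finite simple loopless graph that is biconnected (connected and G − v is connected for every vertex v). If G contains |E| − 1 Hamiltonian paths whose indicator vectors e_H ∈ ℝ^E are affinely independent, then G is resistance nonnegative (RN). -/
open scoped Classical

namespace RCurv

lemma exists_gibbs {ι σ : Type*} [Fintype ι] [Fintype σ] (a : ι → σ → ℝ) (l : ι → ℝ)
    (hl : ∀ i, 0 < l i) (h : ∀ s, ∑ i, l i * a i s = 0) :
    ∃ θ : σ → ℝ, ∀ s, ∑ i, Real.exp (∑ s', θ s' * a i s') * a i s = 0 := by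
  let L : (σ → ℝ) →ₗ[ℝ] (ι → ℝ) :=
    { toFun := fun θ i => ∑ s', θ s' * a i s'
      map_add' := by
        intro x y; ext i; simp [add_mul, Finset.sum_add_distrib]
      map_smul' := by
        intro r x; ext i; simp [Finset.mul_sum, mul_assoc] }
  have hL : ∀ θ i, L θ i = ∑ s', θ s' * a i s' := fun _ _ => rfl
  let R : Submodule ℝ (ι → ℝ) := LinearMap.range L
  have hRclosed : IsClosed (R : Set (ι → ℝ)) := R.closed_of_finiteDimensional
  let F : (ι → ℝ) → ℝ := fun z => ∑ i, Real.exp (z i)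
  have hF : Continuous F := by fun_prop
  let N : ℝ := Fintype.card ι
  let K : Set (ι → ℝ) := (R : Set (ι → ℝ)) ∩ {z | F z ≤ N}
  have hKclosed : IsClosed K := hRclosed.inter (isClosed_le hF continuous_const)
  have hR0 : ∀ z ∈ R, ∑ i, l i * z i = 0 := by
    rintro z ⟨θ, rfl⟩
    simp only [hL, Finset.mul_sum]
    rw [Finset.sum_comm]
    apply Finset.sum_eq_zero
    intro s _
    have := h s
    calc ∑ i, l i * (θ s * a i s) = θ s * ∑ i, l i * a i s := by
          rw [Finset.mul_sum]; exact Finset.sum_congr rfl fun i _ => by ring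
      _ = 0 := by rw [this, mul_zero]
  have hup : ∀ z ∈ K, ∀ i, z i ≤ N := by
    intro z hz i
    have h1 : Real.exp (z i) ≤ F z :=
      Finset.single_le_sum (f := fun i => Real.exp (z i)) (fun j _ => (Real.exp_pos _).le)
        (Finset.mem_univ i)
    have h2 := Real.add_one_le_exp (z i)
    have h3 : F z ≤ N := hz.2
    linarith
  have hlow : ∀ z ∈ K, ∀ i, -(N * ∑ j, l j) / l i + N ≤ z i := by
    intro z hz i
    have h0 := hR0 z hz.1
    have h1 : l i * (N - z i) ≤ ∑ j, l j * (N - z j) :=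
      Finset.single_le_sum (f := fun j => l j * (N - z j))
        (fun j _ => mul_nonneg (hl j).le (by linarith [hup z hz j])) (Finset.mem_univ i)
    have h2 : ∑ j, l j * (N - z j) = N * ∑ j, l j := by
      simp only [mul_sub, Finset.sum_sub_distrib, h0, Finset.mul_sum]
      rw [sub_zero]
      exact Finset.sum_congr rfl fun i _ => by ring
    rw [h2] at h1
    have h3 : N - z i ≤ (N * ∑ j, l j) / l i := by
      rw [le_div_iff₀ (hl i)]; linarith
    rw [neg_div]; linarith
  have hKcomp : IsCompact K := by
    refine (isCompact_Icc (a := fun i => -(N * ∑ j, l j) / l i + N) (b := fun _ => N)).of_isClosed_subset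
      hKclosed ?_
    intro z hz
    exact ⟨fun i => hlow z hz i, fun i => hup z hz i⟩
  have hK0 : (0 : ι → ℝ) ∈ K := ⟨R.zero_mem, by simp [F, N]⟩
  obtain ⟨z, hzK, hz⟩ := hKcomp.exists_isMinOn ⟨0, hK0⟩ hF.continuousOn
  have hmin : ∀ y ∈ R, F z ≤ F y := by
    intro y hy
    by_cases hyN : F y ≤ N
    · exact hz ⟨hy, hyN⟩
    · exact le_trans hzK.2 (not_le.mp hyN).le
  obtain ⟨θ, hθ⟩ := hzK.1
  refine ⟨θ, fun s => ?_⟩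
  have hθ' : ∀ i, ∑ s', θ s' * a i s' = z i := fun i => by rw [← hθ, hL]
  simp only [hθ']
  let g : ℝ → ℝ := fun t => ∑ i, Real.exp (z i + t * a i s)
  have hg : HasDerivAt g (∑ i, Real.exp (z i) * a i s) 0 := by
    have : ∀ i ∈ Finset.univ, HasDerivAt (fun t : ℝ => Real.exp (z i + t * a i s))
        (Real.exp (z i) * a i s) 0 := by
      intro i _
      have := (((hasDerivAt_id (0:ℝ)).mul_const (a i s)).const_add (z i)).exp
      simpa using this
    exact HasDerivAt.fun_sum this
  refine IsLocalMin.hasDerivAt_eq_zero (f := g) (a := 0) ?_ hg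
  refine Filter.Eventually.of_forall fun t => ?_
  have hy : (fun i => z i + t * a i s) ∈ R := by
    classical
    have : (fun i => z i + t * a i s) = z + t • L (Pi.single s 1) := by
      ext i
      simp [hL, Pi.single_apply]
    rw [this]
    exact R.add_mem hzK.1 (R.smul_mem _ ⟨_, rfl⟩)
  simpa [g, F] using hmin _ hy

lemma ker_le_of_indep {E : Type*} [Fintype E] {m : ℕ} (hm : Fintype.card E ≤ m + 1)
    (g : Fin m → E → ℝ) (hg : LinearIndependent ℝ g) (φ χ : (E → ℝ) →ₗ[ℝ] ℝ)
    (hφ : ∀ i, φ (g i) = 0) (hχ : ∀ i, χ (g i) = 0) (y : E → ℝ) (hy : φ y ≠ 0)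
    (x : E → ℝ) (hx : φ x = 0) : χ x = 0 := by
  have h1 : Submodule.span ℝ (Set.range g) ≤ LinearMap.ker φ := by
    rw [Submodule.span_le]; rintro _ ⟨i, rfl⟩; exact hφ i
  have h2 : Submodule.span ℝ (Set.range g) ≤ LinearMap.ker χ := by
    rw [Submodule.span_le]; rintro _ ⟨i, rfl⟩; exact hχ i
  have h3 : Module.finrank ℝ (Submodule.span ℝ (Set.range g)) = m := by
    rw [finrank_span_eq_card hg, Fintype.card_fin]
  have h4 : Module.finrank ℝ (LinearMap.ker φ) < Fintype.card E := by
    have : LinearMap.ker φ < ⊤ := by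
      rw [lt_top_iff_ne_top]
      intro h
      apply hy
      have : y ∈ LinearMap.ker φ := h ▸ Submodule.mem_top
      exact this
    have := Submodule.finrank_lt (lt_top_iff_ne_top.mp this)
    simpa using this
  have h5 := Submodule.eq_of_le_of_finrank_le h1 (by omega)
  have : x ∈ LinearMap.ker φ := hx
  rw [← h5] at this
  exact h2 this

lemma mem_spanningTrees {V : Type*} [Fintype V] [DecidableEq V]
    (G : SimpleGraph V) (T : Finset (Sym2 V)) :
    T ∈ spanningTrees G ↔ IsSpanningTree G T := by
  unfold spanningTrees
  rw [Finset.mem_filter]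
  exact ⟨fun h => h.2, fun h => ⟨Finset.mem_univ _, h⟩⟩

lemma exists_leaf_tree {V : Type*} [Fintype V] [DecidableEq V]
    (G : SimpleGraph V) (hG : G.Connected) (v : V)
    (hbi : (G.induce ({v}ᶜ : Set V)).Connected) :
    ∃ T ∈ spanningTrees G, (T.filter fun e => v ∈ e).card ≤ 1 := by
  obtain ⟨u, hu⟩ := hbi.nonempty
  have huv : v ≠ u := fun h => hu h.symm
  obtain ⟨w, hw⟩ : ∃ w, G.Adj v w := by
    obtain ⟨p⟩ := hG.preconnected v u
    cases p with
    | nil => exact absurd rfl huv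
    | cons h _ => exact ⟨_, h⟩
  let H : SimpleGraph V :=
    { Adj := fun a b => G.Adj a b ∧ ((a ≠ v ∧ b ≠ v) ∨ s(a, b) = s(v, w))
      symm := ⟨fun a b h => ⟨h.1.symm, by
        rcases h.2 with h | h
        · exact Or.inl ⟨h.2, h.1⟩
        · exact Or.inr (by rw [Sym2.eq_swap]; exact h)⟩⟩
      loopless := ⟨fun a h => h.1.ne rfl⟩ }
  have hr : ∀ a, H.Reachable a w := by
    intro a
    by_cases ha : a = v
    · subst ha
      exact SimpleGraph.Adj.reachable ⟨hw, Or.inr rfl⟩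
    · let hom : G.induce ({v}ᶜ : Set V) →g H :=
        ⟨fun x => x.1, fun {x y} hxy => ⟨hxy, Or.inl ⟨x.2, y.2⟩⟩⟩
      have := (hbi.preconnected ⟨a, ha⟩ ⟨w, hw.ne'⟩).map hom
      exact this
  have hH : H.Connected := by
    have : Nonempty V := ⟨v⟩
    exact ⟨fun a b => (hr a).trans (hr b).symm⟩
  obtain ⟨T, hT, hTt⟩ := hH.exists_isTree_le
  refine ⟨T.edgeFinset, ?_, ?_⟩
  · rw [mem_spanningTrees, IsSpanningTree, SimpleGraph.coe_edgeFinset,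
      SimpleGraph.fromEdgeSet_edgeSet]
    refine ⟨?_, hTt⟩
    apply SimpleGraph.edgeSet_mono
    exact hT.trans fun a b h => h.1
  · have : Nonempty (Sym2 V) := ⟨s(v, w)⟩
    rw [Finset.card_le_one_iff_subset_singleton]
    refine ⟨s(v, w), ?_⟩
    intro e he
    rw [Finset.mem_filter, SimpleGraph.mem_edgeFinset] at he
    obtain ⟨he, hve⟩ := he
    induction e with | _ a b =>
    have := (hT he).2
    rw [Finset.mem_singleton]
    rcases this with h | h
    · rw [Sym2.mem_iff] at hve
      rcases hve with rfl | rfl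
      · exact absurd rfl h.1
      · exact absurd rfl h.2
    · exact h

lemma card_of_isSpanningTree {V : Type*} [Fintype V] [DecidableEq V]
    (G : SimpleGraph V) (T : Finset (Sym2 V)) (hT : IsSpanningTree G T) :
    T.card + 1 = Fintype.card V := by
  have := hT.2.card_edgeFinset
  rw [← this]
  congr 2
  ext e
  simp only [SimpleGraph.mem_edgeFinset, SimpleGraph.edgeSet_fromEdgeSet, Set.mem_sdiff,
    Finset.mem_coe]
  constructor
  · intro h
    exact ⟨h, G.not_isDiag_of_mem_edgeSet (hT.1 h)⟩
  · exact fun h => h.1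

/-- Degree of `v` in the edge set `T`, as a real number. -/
noncomputable def rdeg {V : Type*} [Fintype V] [DecidableEq V] (v : V) (T : Finset (Sym2 V)) : ℝ :=
  ((T.filter fun e => v ∈ e).card : ℝ)

lemma rdeg_eq_sum {V : Type*} [Fintype V] [DecidableEq V] (v : V) (T : Finset (Sym2 V)) :
    rdeg v T = ∑ e ∈ T, if v ∈ e then (1 : ℝ) else 0 := by
  unfold rdeg
  rw [Finset.card_filter]
  push_cast
  rfl

lemma sum_neighbor {V : Type*} [Fintype V] [DecidableEq V] (G : SimpleGraph V) (v : V)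
    (T : Finset (Sym2 V)) (hT : IsSpanningTree G T) :
    ∑ u ∈ G.neighborFinset v, (if s(u, v) ∈ T then (1 : ℝ) else 0) = rdeg v T := by
  unfold rdeg
  rw [← Finset.sum_filter, Finset.sum_const, nsmul_eq_mul, mul_one]
  congr 1
  refine Finset.card_bij (fun u _ => s(u, v)) ?_ ?_ ?_
  · intro u hu
    rw [Finset.mem_filter] at hu ⊢
    exact ⟨hu.2, Sym2.mem_mk_right u v⟩
  · intro a _ b _ h
    exact Sym2.congr_left.mp h
  · intro e he
    rw [Finset.mem_filter] at he
    obtain ⟨he, u, rfl⟩ := he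
    refine ⟨u, ?_, Sym2.eq_swap⟩
    rw [Finset.mem_filter, SimpleGraph.mem_neighborFinset]
    refine ⟨?_, by rw [Sym2.eq_swap]; exact he⟩
    exact hT.1 he

lemma isRN_of_weights {V : Type*} [Fintype V] [DecidableEq V] (G : SimpleGraph V)
    (hS : (spanningTrees G).Nonempty) (μ : Finset (Sym2 V) → ℝ)
    (hμ : ∀ T ∈ spanningTrees G, 0 < μ T)
    (h : ∀ v, ∑ T ∈ spanningTrees G, μ T * (rdeg v T - 2) ≤ 0) : IsRN G := by
  set S := spanningTrees G with hSdef
  set M := ∑ T ∈ S, μ T with hM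
  have hMpos : 0 < M := Finset.sum_pos hμ hS
  let D : V → ℝ := fun v => (∑ T ∈ S, μ T * rdeg v T) / M
  have hD2 : ∀ v, D v ≤ 2 := by
    intro v
    have := h v
    simp only [mul_sub, Finset.sum_sub_distrib, ← Finset.sum_mul] at this
    rw [div_le_iff₀ hMpos]
    linarith
  obtain ⟨θ, hθ⟩ := exists_gibbs (ι := ↥S) (σ := V) (fun T v => rdeg v T.1 - D v)
    (fun T => μ T.1) (fun T => hμ T.1 T.2) (by
      intro v
      rw [Finset.sum_coe_sort S (fun T => μ T * (rdeg v T - D v))]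
      simp only [mul_sub, Finset.sum_sub_distrib, ← Finset.sum_mul]
      rw [← hM, mul_div_cancel₀ _ hMpos.ne', sub_self])
  let c : Sym2 V → ℝ := fun e => Real.exp (∑ v, if v ∈ e then θ v else 0)
  have hc : ∀ e, 0 < c e := fun e => Real.exp_pos _
  let W : Finset (Sym2 V) → ℝ := fun T => ∏ t ∈ T, c t
  have hW : ∀ T, W T = Real.exp (∑ v, θ v * rdeg v T) := by
    intro T
    simp only [W, c]
    rw [← Real.exp_sum, Finset.sum_comm]
    congr 1
    refine Finset.sum_congr rfl fun v _ => ?_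
    rw [rdeg_eq_sum, Finset.mul_sum]
    exact Finset.sum_congr rfl fun e _ => by split_ifs <;> simp
  have hkey : ∀ v, ∑ T ∈ S, W T * (rdeg v T - D v) = 0 := by
    intro v
    have h1 := hθ v
    rw [Finset.sum_coe_sort S
      (fun T => Real.exp (∑ v', θ v' * (rdeg v' T - D v')) * (rdeg v T - D v))] at h1
    have h2 : ∀ T, Real.exp (∑ v', θ v' * (rdeg v' T - D v'))
        = Real.exp (-∑ v', θ v' * D v') * W T := by
      intro T
      rw [hW, ← Real.exp_add]
      congr 1
      simp only [mul_sub, Finset.sum_sub_distrib]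
      ring
    simp only [h2, mul_assoc] at h1
    rw [← Finset.mul_sum] at h1
    exact (mul_eq_zero.mp h1).resolve_left (Real.exp_pos _).ne'
  have hZ : 0 < ∑ T ∈ S, W T := Finset.sum_pos (fun T _ => Finset.prod_pos fun e _ => hc e) hS
  refine ⟨c, fun e _ => hc e, fun v => ?_⟩
  have hsum : ∑ u ∈ G.neighborFinset v, relRes G c s(u, v) = D v := by
    have h1 : ∀ u, relRes G c s(u, v)
        = (∑ T ∈ S, W T * (if s(u, v) ∈ T then (1 : ℝ) else 0)) / ∑ T ∈ S, W T := by
      intro u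
      unfold relRes
      congr 1
      rw [Finset.sum_filter]
      exact Finset.sum_congr rfl fun T _ => by split_ifs <;> simp [W]
    simp only [h1]
    rw [← Finset.sum_div, Finset.sum_comm, div_eq_iff hZ.ne']
    have h2 := hkey v
    simp only [mul_sub, Finset.sum_sub_distrib, ← Finset.sum_mul] at h2
    rw [mul_comm (D v), ← sub_eq_zero.mp h2]
    refine Finset.sum_congr rfl fun T hT => ?_
    rw [← Finset.mul_sum, sum_neighbor G v T ((mem_spanningTrees G T).mp hT)]
  unfold curv
  rw [hsum]
  linarith [hD2 v]

/-- Restriction of an indicator vector to the edges of `G`. -/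
noncomputable def rvec {V : Type*} [Fintype V] [DecidableEq V] (G : SimpleGraph V)
    (T : Finset (Sym2 V)) : ↥G.edgeFinset → ℝ := fun e => indVec T e.1

/-- The functional measuring the degree excess at `v`. -/
noncomputable def phi {V : Type*} [Fintype V] [DecidableEq V] (G : SimpleGraph V) (v : V) :
    (↥G.edgeFinset → ℝ) →ₗ[ℝ] ℝ :=
  ∑ e : ↥G.edgeFinset, ((if v ∈ e.1 then (1 : ℝ) else 0) - 2 / ((Fintype.card V : ℝ) - 1)) •
    LinearMap.proj e

lemma sum_rvec {V : Type*} [Fintype V] [DecidableEq V] (G : SimpleGraph V)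
    (T : Finset (Sym2 V)) (hT : IsSpanningTree G T) (g : Sym2 V → ℝ) :
    ∑ e : ↥G.edgeFinset, g e.1 * rvec G T e = ∑ e ∈ T, g e := by
  unfold rvec
  rw [Finset.sum_coe_sort G.edgeFinset (fun e => g e * indVec T e)]
  have hsub : T ⊆ G.edgeFinset := fun e he => SimpleGraph.mem_edgeFinset.mpr (hT.1 he)
  rw [← Finset.sum_subset hsub]
  · exact Finset.sum_congr rfl fun e he => by simp [indVec, he]
  · intro e _ he
    simp [indVec, he]

lemma phi_rvec {V : Type*} [Fintype V] [DecidableEq V] (G : SimpleGraph V) (v : V)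
    (hn : 2 ≤ Fintype.card V) (T : Finset (Sym2 V)) (hT : IsSpanningTree G T) :
    phi G v (rvec G T) = rdeg v T - 2 := by
  have h1 : phi G v (rvec G T) = ∑ e : ↥G.edgeFinset,
      ((if v ∈ e.1 then (1 : ℝ) else 0) - 2 / ((Fintype.card V : ℝ) - 1)) * rvec G T e := by
    simp [phi]
  rw [h1, sum_rvec G T hT
    (fun e => (if v ∈ e then (1 : ℝ) else 0) - 2 / ((Fintype.card V : ℝ) - 1)),
    Finset.sum_sub_distrib, ← rdeg_eq_sum, Finset.sum_const, nsmul_eq_mul]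
  have h2 := card_of_isSpanningTree G T hT
  have h3 : (T.card : ℝ) = (Fintype.card V : ℝ) - 1 := by rw [← h2]; push_cast; ring
  have h4 : (2 : ℝ) ≤ Fintype.card V := by exact_mod_cast hn
  have h5 : (Fintype.card V : ℝ) - 1 ≠ 0 := by linarith
  rw [h3, mul_div_cancel₀ _ h5]

lemma linInd_rvec {V : Type*} [Fintype V] [DecidableEq V] (G : SimpleGraph V)
    (hn : 2 ≤ Fintype.card V) {m : ℕ} (f : Fin m → Finset (Sym2 V))
    (hf : ∀ i, IsSpanningTree G (f i)) (hind : AffineIndependent ℝ fun i => indVec (f i)) :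
    LinearIndependent ℝ fun i => rvec G (f i) := by
  rw [Fintype.linearIndependent_iff]
  intro a ha i
  rw [affineIndependent_iff] at hind
  have hpt : ∀ e : ↥G.edgeFinset, ∑ i, a i * rvec G (f i) e = 0 := by
    intro e
    have := congrFun ha e
    simpa using this
  refine hind Finset.univ a ?_ ?_ i (Finset.mem_univ i)
  · have h1 : ∑ e : ↥G.edgeFinset, ∑ i, a i * rvec G (f i) e = 0 :=
      Finset.sum_eq_zero fun e _ => hpt e
    rw [Finset.sum_comm] at h1
    have h2 : ∀ i, ∑ e : ↥G.edgeFinset, a i * rvec G (f i) e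
        = a i * ((Fintype.card V : ℝ) - 1) := by
      intro i
      rw [← Finset.mul_sum]
      have h3 := sum_rvec G (f i) (hf i) (fun _ => 1)
      simp only [one_mul, Finset.sum_const, nsmul_eq_mul, mul_one] at h3
      rw [h3, ← card_of_isSpanningTree G (f i) (hf i)]
      push_cast
      ring
    simp only [h2] at h1
    rw [← Finset.sum_mul] at h1
    have h4 : (2 : ℝ) ≤ Fintype.card V := by exact_mod_cast hn
    exact (mul_eq_zero.mp h1).resolve_right (by linarith)
  · ext e
    by_cases he : e ∈ G.edgeFinset
    · simpa [rvec] using hpt ⟨e, he⟩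
    · have : ∀ i, indVec (f i) e = 0 := by
        intro i
        have : e ∉ f i := fun h => he (SimpleGraph.mem_edgeFinset.mpr ((hf i).1 h))
        simp [indVec, this]
      simp [this]

end RCurv


open RCurv in
/-- If a biconnected graph contains `|E| - 1` Hamiltonian paths whose indicator vectors are
affinely independent, then it is resistance nonnegative. -/
theorem isRN_of_affineIndependent_hamPaths {V : Type*} [Fintype V] [DecidableEq V]
    (G : SimpleGraph V) (hG : G.Connected)
    (hbi : ∀ v : V, (G.induce ({v}ᶜ : Set V)).Connected)
    (f : Fin (G.edgeFinset.card - 1) → Finset (Sym2 V))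
    (hf : ∀ i, IsHamPath G (f i))
    (hind : AffineIndependent ℝ fun i => indVec (f i)) :
    IsRN G := by
  have hne : (spanningTrees G).Nonempty := by
    obtain ⟨v⟩ := hG.nonempty
    obtain ⟨T, hT, _⟩ := exists_leaf_tree G hG v (hbi v)
    exact ⟨T, hT⟩
  have hn : 2 ≤ Fintype.card V := by
    obtain ⟨v⟩ := hG.nonempty
    obtain ⟨u, hu⟩ := (hbi v).nonempty
    exact Fintype.one_lt_card_iff.mpr ⟨u, v, hu⟩
  have hfS : ∀ i, f i ∈ spanningTrees G := fun i => (mem_spanningTrees G _).mpr (hf i).1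
  have hlin := linInd_rvec G hn f (fun i => (hf i).1) hind
  have hle : ∀ i v, rdeg v (f i) - 2 ≤ 0 := by
    intro i v
    have h1 := (hf i).2 v
    have h2 : rdeg v (f i) ≤ 2 := by
      unfold rdeg
      exact_mod_cast h1
    linarith
  -- the common linear functional of weights
  let Φ : V → (Finset (Sym2 V) → ℝ) → ℝ := fun v μ =>
    ∑ T ∈ spanningTrees G, μ T * (rdeg v T - 2)
  have hΦ : ∀ v μ, Φ v μ = phi G v (∑ T ∈ spanningTrees G, μ T • rvec G T) := by
    intro v μ
    rw [map_sum]
    refine Finset.sum_congr rfl fun T hT => ?_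
    rw [map_smul, phi_rvec G v hn T ((mem_spanningTrees G T).mp hT), smul_eq_mul]
  let U : Set V := {v | ∀ i, rdeg v (f i) - 2 = 0}
  have hU : ∀ v ∈ U, ∀ i, phi G v (rvec G (f i)) = 0 := fun v hv i => by
    rw [phi_rvec G v hn _ (hf i).1]; exact hv i
  -- first step: positive weights which are good on `U`
  obtain ⟨l, hl, hlU⟩ : ∃ l : Finset (Sym2 V) → ℝ, (∀ T, 0 < l T) ∧ ∀ v ∈ U, Φ v l ≤ 0 := by
    by_cases hall : ∀ v ∈ U, Φ v (fun _ => 1) ≤ 0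
    · exact ⟨fun _ => 1, fun _ => one_pos, hall⟩
    · push Not at hall
      obtain ⟨v₁, hv₁, hs⟩ := hall
      obtain ⟨T₁, hT₁, hd⟩ := exists_leaf_tree G hG v₁ (hbi v₁)
      have hd' : rdeg v₁ T₁ - 2 < 0 := by
        have : rdeg v₁ T₁ ≤ 1 := by
          unfold rdeg
          exact_mod_cast hd
        linarith
      set s := Φ v₁ (fun _ => 1) with hsdef
      set d := rdeg v₁ T₁ - 2 with hddef
      let l : Finset (Sym2 V) → ℝ := fun T => 1 + if T = T₁ then s / (-d) else 0
      have hpos : 0 < s / (-d) := div_pos hs (by linarith)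
      have hl1 : Φ v₁ l = 0 := by
        have : Φ v₁ l = s + s / (-d) * d := by
          simp only [Φ, l, add_mul, Finset.sum_add_distrib, ite_mul, zero_mul,
            Finset.sum_ite_eq', hT₁, if_true]
          simp [hsdef, Φ, hddef]
        rw [this]
        have : d ≠ 0 := hd'.ne
        field_simp
        ring
      refine ⟨l, fun T => ?_, fun v hv => le_of_eq ?_⟩
      · simp only [l]
        split_ifs <;> linarith
      · rw [hΦ] at hl1 ⊢
        refine ker_le_of_indep ?_ (fun i => rvec G (f i)) hlin (phi G v₁) (phi G v) (hU v₁ hv₁)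
          (hU v hv) (rvec G T₁) ?_ _ hl1
        · rw [Fintype.card_coe]
          omega
        · rw [phi_rvec G v₁ hn _ ((mem_spanningTrees G T₁).mp hT₁)]
          exact hd'.ne
  -- second step: add a large multiple of the Hamiltonian paths
  let q : Finset (Sym2 V) → ℝ := fun T => ∑ i, if T = f i then 1 else 0
  have hq0 : ∀ T, 0 ≤ q T := fun T => Finset.sum_nonneg fun i _ => by split_ifs <;> norm_num
  have hq : ∀ v, Φ v q = ∑ i, (rdeg v (f i) - 2) := by
    intro v
    simp only [Φ, q, Finset.sum_mul]
    rw [Finset.sum_comm]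
    refine Finset.sum_congr rfl fun i _ => ?_
    simp [ite_mul, Finset.sum_ite_eq', hfS i]
  have hqle : ∀ v, Φ v q ≤ 0 := fun v => by
    rw [hq]; exact Finset.sum_nonpos fun i _ => hle i v
  have hqlt : ∀ v, v ∉ U → Φ v q < 0 := by
    intro v hv
    simp only [U, Set.mem_setOf_eq, not_forall] at hv
    obtain ⟨i, hi⟩ := hv
    rw [hq]
    exact Finset.sum_neg' (fun i _ => hle i v) ⟨i, Finset.mem_univ i, lt_of_le_of_ne (hle i v) hi⟩
  let B : ℝ := ∑ v, |Φ v l / Φ v q|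
  have hB0 : 0 ≤ B := Finset.sum_nonneg fun v _ => abs_nonneg _
  refine isRN_of_weights G hne (fun T => l T + B * q T) (fun T _ => ?_) (fun v => ?_)
  · have := mul_nonneg hB0 (hq0 T)
    linarith [hl T]
  · have hsplit : ∑ T ∈ spanningTrees G, (l T + B * q T) * (rdeg v T - 2)
        = Φ v l + B * Φ v q := by
      simp only [Φ, add_mul, Finset.sum_add_distrib, Finset.mul_sum, mul_assoc]
    rw [hsplit]
    by_cases hv : v ∈ U
    · have := mul_nonpos_of_nonneg_of_nonpos hB0 (hqle v)
      linarith [hlU v hv]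
    · have h1 : |Φ v l / Φ v q| ≤ B :=
        Finset.single_le_sum (f := fun v => |Φ v l / Φ v q|) (fun v _ => abs_nonneg _)
          (Finset.mem_univ v)
      have h2 : -(Φ v l / Φ v q) ≤ B := (neg_le_abs _).trans h1
      have h3 := hqlt v hv
      have h4 : B * Φ v q ≤ -(Φ v l / Φ v q) * Φ v q := mul_le_mul_of_nonpos_right h2 h3.le
      have h5 : -(Φ v l / Φ v q) * Φ v q = -Φ v l := by
        rw [neg_mul, div_mul_cancel₀ _ h3.ne]
      linarith
end

section
/- Let G = (V, E) be a finite simple connected loopless graph with normalized edge weights 0 < c < ∞, resistance matrix Ω and inverse resistance matrix K = Ω⁻¹, and suppose the resistance curvature p_v(c) = 1 − (1/2) ∑_{u : uv ∈ E} c_{uv} ω_{uv} satisfies p_v(c) ≥ 0 for all v ∈ V. Then the resistance capacity τ_•(c) : 2^V → ℝ is submodular: τ_A(c) + τ_B(c) ≥ τ_{A∪B}(c) + τ_{A∩B}(c) for all A, B ⊆ V. -/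
open scoped Classical

namespace RCurv

variable {V : Type*} [Fintype V] [DecidableEq V]

/-- The weighted Laplacian matrix of `G` with edge weights `c`. -/
noncomputable def lapMat (G : SimpleGraph V) (c : Sym2 V → ℝ) : Matrix V V ℝ :=
  Matrix.of fun u v =>
    if u = v then ∑ w ∈ G.neighborFinset u, c s(u, w)
    else if G.Adj u v then -c s(u, v) else 0

/-- The all-ones matrix. -/
noncomputable def onesMat : Matrix V V ℝ := Matrix.of fun _ _ => (1 : ℝ)

/-- The Moore–Penrose pseudoinverse of the Laplacian, `(L + (1/n)J)⁻¹ - (1/n)J`. -/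
noncomputable def lapPinv (G : SimpleGraph V) (c : Sym2 V → ℝ) : Matrix V V ℝ :=
  (lapMat G c + ((Fintype.card V : ℝ))⁻¹ • onesMat)⁻¹ - ((Fintype.card V : ℝ))⁻¹ • onesMat

/-- The effective resistance between two vertices. -/
noncomputable def effRes (G : SimpleGraph V) (c : Sym2 V → ℝ) (u v : V) : ℝ :=
  lapPinv G c u u + lapPinv G c v v - 2 * lapPinv G c u v

/-- The resistance matrix `Ω` of `G`. -/
noncomputable def resMat (G : SimpleGraph V) (c : Sym2 V → ℝ) : Matrix V V ℝ :=
  Matrix.of fun u v => effRes G c u v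

/-- The resistance capacity `τ_U(c)` of a vertex subset `U`. -/
noncomputable def resCap (G : SimpleGraph V) (c : Sym2 V → ℝ) (U : Finset V) : ℝ :=
  if U.card = 0 then 0
  else if U.card = 1 then 1 / 2
  else 1 / 2 + (1 / 2) *
    (∑ u : {x // x ∈ U}, ∑ v : {x // x ∈ U},
      (((resMat G c).submatrix (fun a : {x // x ∈ U} => (a : V))
        (fun a : {x // x ∈ U} => (a : V)))⁻¹) u v)⁻¹

end RCurv

namespace RCurv
open Matrix

section aux
variable {V : Type*} [Fintype V] [DecidableEq V]

noncomputable def wt (G : SimpleGraph V) (c : Sym2 V → ℝ) (u v : V) : ℝ :=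
  if G.Adj u v then c s(u, v) else 0

lemma wt_symm (G : SimpleGraph V) (c : Sym2 V → ℝ) (u v : V) : wt G c u v = wt G c v u := by
  simp only [wt, G.adj_comm u v, Sym2.eq_swap (a := u) (b := v)]

lemma wt_nonneg (G : SimpleGraph V) (c : Sym2 V → ℝ) (hc : ∀ e ∈ G.edgeSet, 0 < c e) (u v : V) :
    0 ≤ wt G c u v := by
  unfold wt
  split_ifs with h
  · exact (hc _ (by simpa using h)).le
  · exact le_rfl

lemma sum_nbr (G : SimpleGraph V) (c : Sym2 V → ℝ) (u : V) (f : V → ℝ) :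
    ∑ w ∈ G.neighborFinset u, c s(u, w) * f w = ∑ w, wt G c u w * f w := by
  simp only [wt, ite_mul, zero_mul]
  rw [← Finset.sum_filter]
  apply Finset.sum_congr _ (fun _ _ => rfl)
  ext x; simp

lemma lapMat_entry (G : SimpleGraph V) (c : Sym2 V → ℝ) (u v : V) :
    lapMat G c u v = (if u = v then ∑ w, wt G c u w else 0) - wt G c u v := by
  have h := sum_nbr G c u (fun _ => 1)
  simp only [mul_one] at h
  simp only [lapMat, Matrix.of_apply, h]
  by_cases huv : u = v
  · subst huv; simp [wt]
  · simp only [huv, if_false, wt]; split_ifs <;> simp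

lemma lap_mulVec (G : SimpleGraph V) (c : Sym2 V → ℝ) (y : V → ℝ) (u : V) :
    (lapMat G c *ᵥ y) u = ∑ x, wt G c u x * (y u - y x) := by
  simp only [mulVec, dotProduct, lapMat_entry, sub_mul, ite_mul, zero_mul, mul_sub,
    Finset.sum_sub_distrib, Finset.sum_ite_eq, Finset.mem_univ, if_true, Finset.sum_mul]

lemma lap_form (G : SimpleGraph V) (c : Sym2 V → ℝ) (y z : V → ℝ) :
    y ⬝ᵥ lapMat G c *ᵥ z = (1/2) * ∑ u, ∑ v, wt G c u v * ((y u - y v) * (z u - z v)) := by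
  have h1 : y ⬝ᵥ lapMat G c *ᵥ z = ∑ u, ∑ v, wt G c u v * (y u * (z u - z v)) := by
    simp only [dotProduct, lap_mulVec, Finset.mul_sum]
    refine Finset.sum_congr rfl fun u _ => Finset.sum_congr rfl fun v _ => by ring
  have h2 : y ⬝ᵥ lapMat G c *ᵥ z = ∑ u, ∑ v, wt G c u v * (y v * (z v - z u)) := by
    rw [h1, Finset.sum_comm]
    refine Finset.sum_congr rfl fun u _ => Finset.sum_congr rfl fun v _ => by
      rw [wt_symm G c v u]
  have h3 : ∑ u, ∑ v, wt G c u v * ((y u - y v) * (z u - z v)) =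
      (∑ u, ∑ v, wt G c u v * (y u * (z u - z v))) +
      ∑ u, ∑ v, wt G c u v * (y v * (z v - z u)) := by
    simp only [← Finset.sum_add_distrib]
    refine Finset.sum_congr rfl fun u _ => Finset.sum_congr rfl fun v _ => by ring
  rw [h3, ← h1, ← h2]; ring

lemma lap_form_comm (G : SimpleGraph V) (c : Sym2 V → ℝ) (y z : V → ℝ) :
    y ⬝ᵥ lapMat G c *ᵥ z = z ⬝ᵥ lapMat G c *ᵥ y := by
  simp only [lap_form]
  congr 1
  refine Finset.sum_congr rfl fun u _ => Finset.sum_congr rfl fun v _ => by ring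

lemma lap_form_nonneg (G : SimpleGraph V) (c : Sym2 V → ℝ) (hc : ∀ e ∈ G.edgeSet, 0 < c e)
    (y : V → ℝ) : 0 ≤ y ⬝ᵥ lapMat G c *ᵥ y := by
  rw [lap_form]
  refine mul_nonneg (by norm_num) (Finset.sum_nonneg fun u _ => Finset.sum_nonneg fun v _ =>
    mul_nonneg (wt_nonneg G c hc u v) (mul_self_nonneg _))

lemma lap_form_const (G : SimpleGraph V) (hG : G.Connected) (c : Sym2 V → ℝ)
    (hc : ∀ e ∈ G.edgeSet, 0 < c e)
    (y : V → ℝ) (h : y ⬝ᵥ lapMat G c *ᵥ y = 0) (u v : V) : y u = y v := by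
  rw [lap_form] at h
  have h' : ∑ u, ∑ v, wt G c u v * ((y u - y v) * (y u - y v)) = 0 := by linarith
  have nn : ∀ u v, 0 ≤ wt G c u v * ((y u - y v) * (y u - y v)) := fun u v =>
    mul_nonneg (wt_nonneg G c hc u v) (mul_self_nonneg _)
  have hadj : ∀ a b, G.Adj a b → y a = y b := by
    intro a b hab
    have h1 := (Finset.sum_eq_zero_iff_of_nonneg
      (fun u _ => Finset.sum_nonneg fun v _ => nn u v)).1 h' a (Finset.mem_univ _)
    have h2 := (Finset.sum_eq_zero_iff_of_nonneg (fun v _ => nn a v)).1 h1 b (Finset.mem_univ _)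
    have hw : wt G c a b ≠ 0 := by
      simp only [wt, hab, if_true]
      exact (hc _ (by simpa using hab)).ne'
    have := mul_self_eq_zero.1 ((mul_eq_zero.1 h2).resolve_left hw)
    linarith
  obtain ⟨p⟩ := hG.preconnected u v
  induction p with
  | nil => rfl
  | cons hab _ ih => exact (hadj _ _ hab).trans ih

lemma lap_sum (G : SimpleGraph V) (c : Sym2 V → ℝ) (y : V → ℝ) :
    ∑ u, (lapMat G c *ᵥ y) u = 0 := by
  have := lap_form G c (fun _ => 1) y
  simpa [dotProduct] using this

lemma lap_const (G : SimpleGraph V) (c : Sym2 V → ℝ) (a : ℝ) :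
    lapMat G c *ᵥ (fun _ => a) = 0 := by
  ext u; simp [lap_mulVec]

lemma ones_mulVec (y : V → ℝ) :
    (((Fintype.card V : ℝ))⁻¹ • onesMat (V := V)) *ᵥ y =
      fun _ => (Fintype.card V : ℝ)⁻¹ * ∑ u, y u := by
  ext u; simp [mulVec, dotProduct, onesMat, Finset.mul_sum]

lemma lap_transpose (G : SimpleGraph V) (c : Sym2 V → ℝ) : (lapMat G c)ᵀ = lapMat G c := by
  ext u v
  simp only [transpose_apply, lapMat_entry, wt_symm G c v u]
  by_cases h : u = v
  · subst h; rfl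
  · simp [h, Ne.symm h]

section conn

lemma card_pos' (G : SimpleGraph V) (hG : G.Connected) (c : Sym2 V → ℝ)
    (hc : ∀ e ∈ G.edgeSet, 0 < c e) : (0 : ℝ) < Fintype.card V := by
  have := hG.nonempty
  exact_mod_cast Fintype.card_pos

lemma M_unit (G : SimpleGraph V) (hG : G.Connected) (c : Sym2 V → ℝ)
    (hc : ∀ e ∈ G.edgeSet, 0 < c e) : IsUnit (lapMat G c + ((Fintype.card V : ℝ))⁻¹ • onesMat) := by
  rw [← mulVec_injective_iff_isUnit]
  have hn := card_pos' G hG c hc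
  rw [← coe_mulVecLin, injective_iff_map_eq_zero]
  intro y hy
  simp only [mulVecLin_apply, add_mulVec, ones_mulVec] at hy
  have hs : ∑ u, y u = 0 := by
    have h1 : ∑ u, (lapMat G c *ᵥ y + (fun _ => (Fintype.card V : ℝ)⁻¹ * ∑ u, y u : V → ℝ)) u = 0 := by
      rw [hy]; simp
    simp only [Pi.add_apply, Finset.sum_add_distrib, lap_sum] at h1
    simpa [hn.ne'] using h1
  have hL : lapMat G c *ᵥ y = 0 := by
    rw [hs] at hy
    ext u; simpa using congrFun hy u
  have hconst := lap_form_const G hG c hc y (by rw [hL]; simp)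
  obtain ⟨a⟩ := hG.nonempty
  have : ∀ u, y u = y a := fun u => hconst u a
  simp only [this] at hs
  ext u
  rw [this u]
  simpa [hn.ne'] using hs

lemma pinv_lap (G : SimpleGraph V) (hG : G.Connected) (c : Sym2 V → ℝ)
    (hc : ∀ e ∈ G.edgeSet, 0 < c e) (y : V → ℝ) (u : V) :
    (lapPinv G c *ᵥ (lapMat G c *ᵥ y)) u = y u - (Fintype.card V : ℝ)⁻¹ * ∑ v, y v := by
  have hn := card_pos' G hG c hc
  have hM := M_unit G hG c hc
  set M := lapMat G c + ((Fintype.card V : ℝ))⁻¹ • onesMat with hMdef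
  rw [Matrix.isUnit_iff_isUnit_det] at hM
  have key : M *ᵥ (y - fun _ => (Fintype.card V : ℝ)⁻¹ * ∑ v, y v) = lapMat G c *ᵥ y := by
    rw [hMdef, add_mulVec, mulVec_sub, lap_const, ones_mulVec]
    ext u
    simp [hn.ne', Finset.sum_sub_distrib]
  have : M⁻¹ *ᵥ (lapMat G c *ᵥ y) = y - fun _ => (Fintype.card V : ℝ)⁻¹ * ∑ v, y v := by
    rw [← key, mulVec_mulVec, nonsing_inv_mul _ hM, one_mulVec]
  rw [lapPinv, sub_mulVec, ones_mulVec, lap_sum, this]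
  simp

lemma lap_pinv (G : SimpleGraph V) (hG : G.Connected) (c : Sym2 V → ℝ)
    (hc : ∀ e ∈ G.edgeSet, 0 < c e) (z : V → ℝ) (hz : ∑ u, z u = 0) :
    lapMat G c *ᵥ (lapPinv G c *ᵥ z) = z := by
  have hM := M_unit G hG c hc
  -- surjectivity of M
  obtain ⟨y, hy⟩ := (mulVec_surjective_iff_isUnit.2 hM) z
  have hs : ∑ u, y u = 0 := by
    have hn := card_pos' G hG c hc
    have h1 : ∑ u, ((lapMat G c + ((Fintype.card V : ℝ))⁻¹ • onesMat) *ᵥ y) u = 0 := by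
      rw [← hz]; exact congrArg (fun f : V → ℝ => ∑ u, f u) hy
    simp only [add_mulVec, ones_mulVec, Pi.add_apply, Finset.sum_add_distrib, lap_sum] at h1
    simpa [hn.ne'] using h1
  have hL : lapMat G c *ᵥ y = z := by
    rw [← hy]; simp only [add_mulVec, ones_mulVec, hs]; ext u; simp
  have : lapPinv G c *ᵥ z = y := by
    ext u; rw [← hL, pinv_lap G hG c hc, hs]; simp
  rw [this, hL]

lemma pinv_const (G : SimpleGraph V) (hG : G.Connected) (c : Sym2 V → ℝ)
    (hc : ∀ e ∈ G.edgeSet, 0 < c e) (a : ℝ) : lapPinv G c *ᵥ (fun _ => a) = 0 := by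
  have hn := card_pos' G hG c hc
  have hM := M_unit G hG c hc
  rw [Matrix.isUnit_iff_isUnit_det] at hM
  have key : (lapMat G c + ((Fintype.card V : ℝ))⁻¹ • onesMat) *ᵥ (fun _ => a) = fun _ => a := by
    rw [add_mulVec, lap_const, ones_mulVec]
    ext u; simp [hn.ne']
  rw [lapPinv, sub_mulVec]
  nth_rw 1 [← key]
  rw [mulVec_mulVec, nonsing_inv_mul _ hM, one_mulVec, ones_mulVec]
  ext u; simp [hn.ne']

lemma pinv_symm (G : SimpleGraph V) (hG : G.Connected) (c : Sym2 V → ℝ)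
    (hc : ∀ e ∈ G.edgeSet, 0 < c e) : (lapPinv G c)ᵀ = lapPinv G c := by
  have hJ : (onesMat (V := V))ᵀ = onesMat := by ext; rfl
  rw [lapPinv, transpose_sub, transpose_nonsing_inv, transpose_add, lap_transpose,
    transpose_smul, hJ]

lemma res_mulVec (G : SimpleGraph V) (hG : G.Connected) (c : Sym2 V → ℝ)
    (hc : ∀ e ∈ G.edgeSet, 0 < c e) (x : V → ℝ) (u : V) :
    (resMat G c *ᵥ x) u = lapPinv G c u u * (∑ v, x v) + (∑ v, lapPinv G c v v * x v)
      - 2 * (lapPinv G c *ᵥ x) u := by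
  simp only [mulVec, dotProduct, resMat, of_apply, effRes, sub_mul, add_mul,
    Finset.sum_sub_distrib, Finset.sum_add_distrib, Finset.mul_sum, mul_assoc]

lemma res_symm (G : SimpleGraph V) (hG : G.Connected) (c : Sym2 V → ℝ)
    (hc : ∀ e ∈ G.edgeSet, 0 < c e) (u v : V) : resMat G c u v = resMat G c v u := by
  have : lapPinv G c u v = lapPinv G c v u := by
    conv_lhs => rw [← pinv_symm G hG c hc]
    rfl
  simp only [resMat, of_apply, effRes, this]; ring

lemma res_diag (G : SimpleGraph V) (hG : G.Connected) (c : Sym2 V → ℝ)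
    (hc : ∀ e ∈ G.edgeSet, 0 < c e) (u : V) : resMat G c u u = 0 := by
  simp only [resMat, of_apply, effRes]; ring

lemma res_neg (G : SimpleGraph V) (hG : G.Connected) (c : Sym2 V → ℝ)
    (hc : ∀ e ∈ G.edgeSet, 0 < c e) (z : V → ℝ) (hz : ∑ u, z u = 0) :
    z ⬝ᵥ resMat G c *ᵥ z =
      -2 * ((lapPinv G c *ᵥ z) ⬝ᵥ lapMat G c *ᵥ (lapPinv G c *ᵥ z)) := by
  rw [lap_pinv G hG c hc z hz]
  have : resMat G c *ᵥ z = fun u => (∑ v, lapPinv G c v v * z v) - 2 * (lapPinv G c *ᵥ z) u := by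
    ext u; rw [res_mulVec G hG c hc, hz]; ring
  rw [this]
  simp only [dotProduct, mul_sub, Finset.sum_sub_distrib, ← Finset.sum_mul, hz]
  rw [zero_mul, zero_sub, Finset.mul_sum, ← Finset.sum_neg_distrib]
  exact Finset.sum_congr rfl fun u _ => by ring

lemma res_nonpos (G : SimpleGraph V) (hG : G.Connected) (c : Sym2 V → ℝ)
    (hc : ∀ e ∈ G.edgeSet, 0 < c e) (z : V → ℝ) (hz : ∑ u, z u = 0) : z ⬝ᵥ resMat G c *ᵥ z ≤ 0 := by
  rw [res_neg G hG c hc z hz]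
  have := lap_form_nonneg G c hc (lapPinv G c *ᵥ z)
  linarith

lemma res_eq_zero (G : SimpleGraph V) (hG : G.Connected) (c : Sym2 V → ℝ)
    (hc : ∀ e ∈ G.edgeSet, 0 < c e) (z : V → ℝ) (hz : ∑ u, z u = 0) (h : z ⬝ᵥ resMat G c *ᵥ z = 0) : z = 0 := by
  rw [res_neg G hG c hc z hz] at h
  have h0 := lap_form_const G hG c hc (lapPinv G c *ᵥ z) (by linarith)
  obtain ⟨a⟩ := hG.nonempty
  have : lapPinv G c *ᵥ z = fun _ => (lapPinv G c *ᵥ z) a := by ext u; exact h0 u a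
  rw [← lap_pinv G hG c hc z hz, this, lap_const]

lemma res_form_comm (G : SimpleGraph V) (hG : G.Connected) (c : Sym2 V → ℝ)
    (hc : ∀ e ∈ G.edgeSet, 0 < c e) (x z : V → ℝ) :
    x ⬝ᵥ resMat G c *ᵥ z = z ⬝ᵥ resMat G c *ᵥ x := by
  have : (resMat G c)ᵀ = resMat G c := by ext u v; exact res_symm G hG c hc v u
  rw [dotProduct_mulVec, ← mulVec_transpose, this, dotProduct_comm]

/-- dot product with something constant on the support -/
lemma dot_supp (G : SimpleGraph V) (hG : G.Connected) (c : Sym2 V → ℝ)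
    (hc : ∀ e ∈ G.edgeSet, 0 < c e) (U : Finset V) (x g : V → ℝ) (κ : ℝ) (hx : ∀ u, u ∉ U → x u = 0)
    (hg : ∀ u ∈ U, g u = κ) : x ⬝ᵥ g = κ * ∑ u, x u := by
  simp only [dotProduct, Finset.mul_sum]
  refine Finset.sum_congr rfl fun u _ => ?_
  by_cases h : u ∈ U
  · rw [hg u h, mul_comm]
  · simp [hx u h]

lemma resCap_eq (G : SimpleGraph V) (hG : G.Connected) (c : Sym2 V → ℝ)
    (hc : ∀ e ∈ G.edgeSet, 0 < c e) (U : Finset V) (hU : U.Nonempty) (x : V → ℝ) (κ : ℝ)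
    (hx : ∀ u, u ∉ U → x u = 0) (hs : ∑ u, x u = 1) (hκ : ∀ u ∈ U, (resMat G c *ᵥ x) u = κ) :
    0 ≤ κ ∧ resCap G c U = 1 / 2 + (1 / 2) * κ := by
  have hc0 : U.card ≠ 0 := by simpa [Finset.card_eq_zero] using hU.ne_empty
  by_cases hc1 : U.card = 1
  · obtain ⟨a, rfl⟩ := Finset.card_eq_one.1 hc1
    have hx' : ∀ u, u ≠ a → x u = 0 := fun u hu => hx u (by simpa using hu)
    have hk := hκ a (by simp)
    rw [mulVec, dotProduct, Finset.sum_eq_single a (fun u _ hu => by simp [hx' u hu]) (by simp),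
      res_diag G hG c hc, zero_mul] at hk
    refine ⟨hk.le, ?_⟩
    simp [resCap, ← hk]
  have h2 : 1 < U.card := by omega
  obtain ⟨a, ha, b, hb, hab⟩ := Finset.one_lt_card.1 h2
  have hxx : x ⬝ᵥ resMat G c *ᵥ x = κ := by
    rw [dot_supp G hG c hc U x _ κ hx hκ, hs, mul_one]
  -- positivity
  have hpos : 0 < κ := by
    set e : V → ℝ := Pi.single a (1/2) + Pi.single b (1/2) with he
    set d : V → ℝ := Pi.single a 1 - Pi.single b 1 with hd
    have hdd : d ⬝ᵥ resMat G c *ᵥ d = -2 * resMat G c a b := by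
      simp only [hd, mulVec_sub, sub_dotProduct, dotProduct_sub, single_dotProduct, mulVec_single,
        MulOpposite.op_one, one_smul, one_mul, col_apply]
      rw [res_diag G hG c hc, res_diag G hG c hc, res_symm G hG c hc b a]; ring
    have hee : e ⬝ᵥ resMat G c *ᵥ e = (1/2) * resMat G c a b := by
      simp [he, mulVec_add, mulVec_single, col_apply,
        res_diag G hG c hc, res_symm G hG c hc b a]; ring
    have hds : ∑ u, d u = 0 := by simp [hd]
    have hes : ∑ u, e u = 1 := by simp [he, Finset.sum_add_distrib]; norm_num
    have hdlt : d ⬝ᵥ resMat G c *ᵥ d < 0 := by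
      refine lt_of_le_of_ne (res_nonpos G hG c hc d hds) fun h => ?_
      have := congrFun (res_eq_zero G hG c hc d hds h) a
      simp [hd, hab] at this
    have hzs : ∑ u, (e - x) u = 0 := by simp [Finset.sum_sub_distrib, hes, hs]
    have hz := res_nonpos G hG c hc (e - x) hzs
    have hex : e ⬝ᵥ resMat G c *ᵥ x = κ := by
      rw [dot_supp G hG c hc U e _ κ ?_ hκ, hes, mul_one]
      intro u hu
      have h1 : u ≠ a := fun h => hu (h ▸ ha)
      have h2 : u ≠ b := fun h => hu (h ▸ hb)
      simp [he, h1, h2]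
    rw [mulVec_sub, sub_dotProduct, dotProduct_sub, dotProduct_sub,
      res_form_comm G hG c hc x e, hex, hxx] at hz
    linarith
  refine ⟨hpos.le, ?_⟩
  set N := (resMat G c).submatrix (fun a : {x // x ∈ U} => (a : V))
        (fun a : {x // x ∈ U} => (a : V)) with hN
  -- extension by zero
  have hext : ∀ w : V → ℝ, (∀ u, u ∉ U → w u = 0) → ∀ u : {x // x ∈ U},
      (N *ᵥ (fun v => w v)) u = (resMat G c *ᵥ w) u := by
    intro w hw u
    simp only [mulVec, dotProduct, hN, submatrix_apply]
    rw [Finset.sum_coe_sort U (fun v => resMat G c u v * w v)]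
    exact Finset.sum_subset (Finset.subset_univ _) fun v _ hv => by simp [hw v hv]
  have hunit : IsUnit N := by
    rw [← mulVec_injective_iff_isUnit, ← coe_mulVecLin, injective_iff_map_eq_zero]
    intro y hy
    rw [mulVecLin_apply] at hy
    let w : V → ℝ := fun u => if h : u ∈ U then y ⟨u, h⟩ else 0
    have hw : ∀ u, u ∉ U → w u = 0 := fun u hu => by simp [w, hu]
    have hwy : (fun v : {x // x ∈ U} => w v) = y := by ext v; simp [w]
    have hz : ∀ u ∈ U, (resMat G c *ᵥ w) u = 0 := by
      intro u hu
      rw [← hext w hw ⟨u, hu⟩, hwy, hy]; rfl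
    have h1 := dot_supp G hG c hc U x _ 0 hx hz
    rw [res_form_comm G hG c hc, dot_supp G hG c hc U w _ κ hw hκ, zero_mul] at h1
    have hsw := (mul_eq_zero.1 h1).resolve_left hpos.ne'
    have h2 := dot_supp G hG c hc U w _ 0 hw hz
    rw [zero_mul] at h2
    have := res_eq_zero G hG c hc w hsw h2
    rw [← hwy, this]; rfl
  have hdet := (Matrix.isUnit_iff_isUnit_det _).1 hunit
  have hNx : N *ᵥ (fun v => x v) = fun _ => κ := by
    ext u; rw [hext x hx u, hκ u u.2]
  have hinv : N⁻¹ *ᵥ (fun _ => κ) = fun v : {x // x ∈ U} => x v := by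
    rw [← hNx, mulVec_mulVec, nonsing_inv_mul _ hdet, one_mulVec]
  have hsum : (∑ u, ∑ v, N⁻¹ u v) * κ = 1 := by
    have h1 : ∑ u : {x // x ∈ U}, x u = 1 := by
      rw [Finset.sum_coe_sort U x, ← hs]
      exact Finset.sum_subset (Finset.subset_univ _) fun v _ hv => hx v hv
    rw [← h1, Finset.sum_mul]
    refine Finset.sum_congr rfl fun u _ => ?_
    rw [← congrFun hinv u, mulVec, dotProduct, Finset.sum_mul]
  rw [resCap, if_neg hc0, if_neg hc1, ← hN, inv_eq_of_mul_eq_one_right hsum]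

end conn

noncomputable def pc (G : SimpleGraph V) (c : Sym2 V → ℝ) (v : V) : ℝ :=
  1 - (1 / 2) * ∑ u ∈ G.neighborFinset v, c s(u, v) * effRes G c u v

noncomputable def Phi (G : SimpleGraph V) (c : Sym2 V → ℝ) (y : V → ℝ) : ℝ :=
  2 * (y ⬝ᵥ pc G c) - y ⬝ᵥ lapMat G c *ᵥ y

section conn2

lemma pc_eq (G : SimpleGraph V) (hG : G.Connected) (c : Sym2 V → ℝ)
    (hc : ∀ e ∈ G.edgeSet, 0 < c e) (v : V) : pc G c v = (Fintype.card V : ℝ)⁻¹ +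
    (1/2) * (lapMat G c *ᵥ fun u => lapPinv G c u u) v := by
  have h1 : ∑ u ∈ G.neighborFinset v, c s(u, v) * effRes G c u v
      = ∑ u, wt G c v u * effRes G c u v := by
    rw [← sum_nbr]
    exact Finset.sum_congr rfl fun u _ => by rw [Sym2.eq_swap]
  have hn := card_pos' G hG c hc
  -- column of P
  set e : V → ℝ := (Pi.single v 1 : V → ℝ) - fun _ => (Fintype.card V : ℝ)⁻¹ with he
  have hes : ∑ u, e u = 0 := by simp [he, Finset.sum_sub_distrib, hn.ne']
  have hPe : lapPinv G c *ᵥ e = fun u => lapPinv G c u v := by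
    rw [he, mulVec_sub, pinv_const G hG c hc]
    ext u; simp [mulVec_single]
  have h2 := congrFun (lap_pinv G hG c hc e hes) v
  rw [hPe, lap_mulVec] at h2
  simp only [he, Pi.sub_apply, Pi.single_eq_same] at h2
  rw [pc, h1, lap_mulVec]
  have h3 : ∑ u, wt G c v u * effRes G c u v =
      2 * (∑ u, wt G c v u * (lapPinv G c v v - lapPinv G c u v))
      - ∑ u, wt G c v u * (lapPinv G c v v - lapPinv G c u u) := by
    rw [Finset.mul_sum, ← Finset.sum_sub_distrib]
    exact Finset.sum_congr rfl fun u _ => by rw [effRes]; ring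
  rw [h3, h2]; ring

lemma pc_sum (G : SimpleGraph V) (hG : G.Connected) (c : Sym2 V → ℝ)
    (hc : ∀ e ∈ G.edgeSet, 0 < c e) : ∑ v, pc G c v = 1 := by
  have hn := card_pos' G hG c hc
  simp only [pc_eq G hG c hc, Finset.sum_add_distrib, ← Finset.mul_sum, lap_sum]
  simp [hn.ne']

lemma res_pc (G : SimpleGraph V) (hG : G.Connected) (c : Sym2 V → ℝ)
    (hc : ∀ e ∈ G.edgeSet, 0 < c e) : ∃ h : ℝ, resMat G c *ᵥ pc G c = fun _ => h := by
  refine ⟨(∑ v, lapPinv G c v v * pc G c v) +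
    (Fintype.card V : ℝ)⁻¹ * ∑ v, lapPinv G c v v, ?_⟩
  ext u
  have hp : pc G c = (fun _ => (Fintype.card V : ℝ)⁻¹) +
      (1/2 : ℝ) • (lapMat G c *ᵥ fun u => lapPinv G c u u) := by
    ext v; rw [pc_eq G hG c hc]; rfl
  have h1 : (lapPinv G c *ᵥ pc G c) u = (1/2) * (lapPinv G c u u -
      (Fintype.card V : ℝ)⁻¹ * ∑ v, lapPinv G c v v) := by
    rw [hp, mulVec_add, pinv_const G hG c hc, mulVec_smul, zero_add, Pi.smul_apply,
      pinv_lap G hG c hc, smul_eq_mul]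
  rw [res_mulVec G hG c hc, pc_sum G hG c hc, h1]; ring

lemma res_pc_one (G : SimpleGraph V) (hG : G.Connected) (c : Sym2 V → ℝ)
    (hc : ∀ e ∈ G.edgeSet, 0 < c e) (hnorm : ∑ u : V, ∑ v : V, ((resMat G c)⁻¹) u v = 1) :
    resMat G c *ᵥ pc G c = fun _ => 1 := by
  obtain ⟨h, hh⟩ := res_pc G hG c hc
  have hdet : IsUnit (resMat G c).det := by
    by_contra hcon
    rw [nonsing_inv_apply_not_isUnit _ hcon] at hnorm
    simp at hnorm
  have hinv : (resMat G c)⁻¹ *ᵥ (fun _ => h) = pc G c := by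
    rw [← hh, mulVec_mulVec, nonsing_inv_mul _ hdet, one_mulVec]
  have : h = 1 := by
    have h1 := pc_sum G hG c hc
    rw [← hinv] at h1
    simp only [mulVec, dotProduct, ← Finset.sum_mul] at h1
    rwa [hnorm, one_mul] at h1
  rw [hh, this]

lemma exists_sol (G : SimpleGraph V) (hG : G.Connected) (c : Sym2 V → ℝ)
    (hc : ∀ e ∈ G.edgeSet, 0 < c e) (U : Finset V) (hU : U.Nonempty) : ∃ y : V → ℝ,
    (∀ u ∈ U, y u = 0) ∧ ∀ u, u ∉ U → (lapMat G c *ᵥ y) u = pc G c u := by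
  let N : Matrix V V ℝ := Matrix.of fun u v =>
    if u ∈ U then (1 : Matrix V V ℝ) u v else lapMat G c u v
  have hN : ∀ y u, (N *ᵥ y) u = if u ∈ U then y u else (lapMat G c *ᵥ y) u := by
    intro y u
    by_cases h : u ∈ U
    · simp [mulVec, dotProduct, N, h, one_apply]
    · simp [mulVec, dotProduct, N, h]
  have hunit : IsUnit N := by
    rw [← mulVec_injective_iff_isUnit, ← coe_mulVecLin, injective_iff_map_eq_zero]
    intro y hy
    rw [mulVecLin_apply] at hy
    have h0 : ∀ u ∈ U, y u = 0 := fun u hu => by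
      have := congrFun hy u
      simpa [hN, hu] using this
    have h1 : ∀ u, u ∉ U → (lapMat G c *ᵥ y) u = 0 := fun u hu => by
      have := congrFun hy u
      simpa [hN, hu] using this
    have hc0 := lap_form_const G hG c hc y (by
      refine Finset.sum_eq_zero fun u _ => ?_
      by_cases h : u ∈ U
      · simp [h0 u h]
      · simp [h1 u h])
    obtain ⟨a, ha⟩ := hU
    ext u
    rw [hc0 u a, h0 a ha]; rfl
  obtain ⟨y, hy⟩ := (mulVec_surjective_iff_isUnit.2 hunit) (fun u => if u ∈ U then 0 else pc G c u)
  refine ⟨y, fun u hu => ?_, fun u hu => ?_⟩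
  · have := congrFun hy u
    simpa [hN, hu] using this
  · have := congrFun hy u
    simpa [hN, hu] using this

lemma key (G : SimpleGraph V) (hG : G.Connected) (c : Sym2 V → ℝ)
    (hc : ∀ e ∈ G.edgeSet, 0 < c e) (hnorm : ∑ u : V, ∑ v : V, ((resMat G c)⁻¹) u v = 1) (U : Finset V) (hU : U.Nonempty) :
    ∃ y : V → ℝ, (∀ u ∈ U, y u = 0) ∧ (∀ t : V → ℝ, (∀ u ∈ U, t u = 0) → Phi G c t ≤ Phi G c y) ∧
      resCap G c U = 1 - Phi G c y ∧ 1 / 2 ≤ resCap G c U := by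
  obtain ⟨y, hy0, hyp⟩ := exists_sol G hG c hc U hU
  have hdot : ∀ t : V → ℝ, (∀ u ∈ U, t u = 0) → t ⬝ᵥ pc G c = t ⬝ᵥ lapMat G c *ᵥ y := by
    intro t ht
    refine Finset.sum_congr rfl fun u _ => ?_
    by_cases h : u ∈ U
    · simp [ht u h]
    · rw [hyp u h]
  have hPy : Phi G c y = y ⬝ᵥ pc G c := by rw [Phi, ← hdot y hy0]; ring
  have hyform : y ⬝ᵥ pc G c = (Fintype.card V : ℝ)⁻¹ * (∑ u, y u) +
      (1/2) * ∑ u, lapPinv G c u u * (lapMat G c *ᵥ y) u := by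
    have h1 := lap_form_comm G c y (fun u => lapPinv G c u u)
    simp only [dotProduct] at h1 ⊢
    rw [← h1]
    simp only [pc_eq G hG c hc, mul_add, Finset.sum_add_distrib, Finset.mul_sum]
    congr 1
    · exact Finset.sum_congr rfl fun u _ => by ring
    · exact Finset.sum_congr rfl fun u _ => by ring
  have hcap := resCap_eq G hG c hc U hU (pc G c - lapMat G c *ᵥ y) (1 - 2 * (y ⬝ᵥ pc G c))
    (fun u hu => by simp [hyp u hu])
    (by simp [Finset.sum_sub_distrib, pc_sum G hG c hc, lap_sum])
    (fun u hu => by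
      rw [mulVec_sub, res_pc_one G hG c hc hnorm, Pi.sub_apply, res_mulVec G hG c hc, lap_sum,
        pinv_lap G hG c hc, hy0 u hu, hyform]; ring)
  refine ⟨y, hy0, fun t ht => ?_, ?_, ?_⟩
  · rw [hPy, hdot y hy0, Phi, hdot t ht]
    have := lap_form_nonneg G c hc (t - y)
    rw [mulVec_sub, sub_dotProduct, dotProduct_sub, dotProduct_sub, lap_form_comm G c y t] at this
    linarith
  · rw [hcap.2, hPy]; ring
  · rw [hcap.2]; linarith [hcap.1]

lemma Phi_abs (G : SimpleGraph V) (c : Sym2 V → ℝ)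
    (hc : ∀ e ∈ G.edgeSet, 0 < c e) (hp : ∀ v, 0 ≤ pc G c v) (y : V → ℝ) : Phi G c y ≤ Phi G c (fun u => |y u|) := by
  have h1 : y ⬝ᵥ pc G c ≤ (fun u => |y u|) ⬝ᵥ pc G c :=
    Finset.sum_le_sum fun u _ => mul_le_mul_of_nonneg_right (le_abs_self _) (hp u)
  have h2 : (fun u => |y u|) ⬝ᵥ lapMat G c *ᵥ (fun u => |y u|) ≤ y ⬝ᵥ lapMat G c *ᵥ y := by
    rw [lap_form, lap_form]
    refine mul_le_mul_of_nonneg_left (Finset.sum_le_sum fun u _ => Finset.sum_le_sum fun v _ =>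
      mul_le_mul_of_nonneg_left ?_ (wt_nonneg G c hc u v)) (by norm_num)
    have := abs_abs_sub_abs_le (y u) (y v)
    have := sq_le_sq.2 this
    nlinarith
  unfold Phi; linarith

lemma Phi_super (G : SimpleGraph V) (c : Sym2 V → ℝ)
    (hc : ∀ e ∈ G.edgeSet, 0 < c e) (y z : V → ℝ) :
    Phi G c y + Phi G c z ≤ Phi G c (fun u => max (y u) (z u)) + Phi G c (fun u => min (y u) (z u)) := by
  have h1 : (fun u => max (y u) (z u)) ⬝ᵥ pc G c + (fun u => min (y u) (z u)) ⬝ᵥ pc G c =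
      y ⬝ᵥ pc G c + z ⬝ᵥ pc G c := by
    rw [← add_dotProduct, ← add_dotProduct]
    congr 1; ext u; exact max_add_min _ _
  have h2 : (fun u => max (y u) (z u)) ⬝ᵥ lapMat G c *ᵥ (fun u => max (y u) (z u)) +
      (fun u => min (y u) (z u)) ⬝ᵥ lapMat G c *ᵥ (fun u => min (y u) (z u)) ≤
      y ⬝ᵥ lapMat G c *ᵥ y + z ⬝ᵥ lapMat G c *ᵥ z := by
    simp only [lap_form]
    rw [← mul_add, ← mul_add]
    simp only [← Finset.sum_add_distrib, ← mul_add]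
    refine mul_le_mul_of_nonneg_left (Finset.sum_le_sum fun u _ => Finset.sum_le_sum fun v _ =>
      mul_le_mul_of_nonneg_left ?_ (wt_nonneg G c hc u v)) (by norm_num)
    rcases le_total (y u) (z u) with h | h <;> rcases le_total (y v) (z v) with h' | h' <;>
      simp only [max_eq_left, max_eq_right, min_eq_left, min_eq_right, h, h'] <;>
      nlinarith [mul_nonneg (sub_nonneg.2 h) (sub_nonneg.2 h')]
  unfold Phi; linarith

end conn2
end aux
end RCurv

open RCurv in
/-- For a normalized connected weighted graph with nonnegative resistance curvature, the
resistance capacity is a submodular set function. -/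
theorem resCap_submodular_of_nonneg_curvature
    {V : Type*} [Fintype V] [DecidableEq V]
    (G : SimpleGraph V) (hG : G.Connected)
    (c : Sym2 V → ℝ) (hc : ∀ e ∈ G.edgeSet, 0 < c e)
    (hnorm : ∑ u : V, ∑ v : V, ((resMat G c)⁻¹) u v = 1)
    (hcurv : ∀ v : V,
      0 ≤ 1 - (1 / 2) * ∑ u ∈ G.neighborFinset v, c s(u, v) * effRes G c u v) :
    ∀ A B : Finset V,
      resCap G c (A ∪ B) + resCap G c (A ∩ B) ≤ resCap G c A + resCap G c B := by
  have hp : ∀ v, 0 ≤ pc G c v := hcurv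
  intro A B
  have hbound : ∀ U : Finset V, resCap G c U ≤ 1 := by
    intro U
    rcases U.eq_empty_or_nonempty with rfl | hU
    · simp [resCap]
    · obtain ⟨y, -, hmax, hcap, -⟩ := key G hG c hc hnorm U hU
      have := hmax 0 (by simp)
      simp only [Phi, zero_dotProduct] at this
      rw [hcap, Phi]; linarith
  have hempty : resCap G c ∅ = 0 := by simp [resCap]
  rcases A.eq_empty_or_nonempty with rfl | hA
  · simp [hempty]
  rcases B.eq_empty_or_nonempty with rfl | hB
  · simp [hempty]
  obtain ⟨y, hy0, -, hyc, hy2⟩ := key G hG c hc hnorm A hA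
  obtain ⟨z, hz0, -, hzc, hz2⟩ := key G hG c hc hnorm B hB
  rcases (A ∩ B).eq_empty_or_nonempty with hI | hI
  · rw [hI, hempty]
    linarith [hbound (A ∪ B)]
  obtain ⟨s, -, hs, hsc, -⟩ := key G hG c hc hnorm (A ∩ B) hI
  obtain ⟨t, -, ht, htc, -⟩ := key G hG c hc hnorm (A ∪ B) (hA.mono Finset.subset_union_left)
  have h1 := hs (fun u => max |y u| |z u|) (fun u hu => by
    rw [Finset.mem_inter] at hu; simp [hy0 u hu.1, hz0 u hu.2])
  have h2 := ht (fun u => min |y u| |z u|) (fun u hu => by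
    rcases Finset.mem_union.1 hu with h | h
    · simp [hy0 u h]
    · simp [hz0 u h])
  have h3 := Phi_super G c hc (fun u => |y u|) (fun u => |z u|)
  have h4 := Phi_abs G c hc hp y
  have h5 := Phi_abs G c hc hp z
  rw [hyc, hzc, hsc, htc]
  linarith
end
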